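/- arXiv:2604.13727 — 7 statements merged into one kernel-verified Lean document; each statement's English description precedes it below -/
import Mathlib

section
/- Let f : ℝⁿ → ℝⁿ be continuous, h : ℝⁿ → ℝ continuous, and H = {x ∈ ℝⁿ : h(x) = 0} with 0 ∈ H. Let x₁* = 0, x₂*, …, x_k* ∈ H be pairwise distinct points with f(xᵢ*) = 0 for all i. Suppose V : ℝⁿ → ℝ is continuously differentiable with V(0) = 0, V(x) > 0 for every x ∈ H with x ≠ 0, and there exists ε > 0 such that ⟨∇V(x), f(x)⟩ ≤ −ε · ∏_{i=1}^{k} ‖x − xᵢ*‖² for all x ∈ H. Then 0 is locally asymptotically stable for solutions on H: (i) for every r > 0 there exists δ > 0 such that every global solution on H with ‖x(0)‖ < δ satisfies ‖x(t)‖ < r for all t ≥ 0; and (ii) there exists δ > 0 such that every global solution on H with ‖x(0)‖ < δ satisfies x(t) → 0 as t → ∞. -/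
open scoped RealInnerProductSpace

/-- A global solution on `H = {x | h x = 0}` of the autonomous system `ẋ = f(x)`:
a differentiable curve `x : [0,∞) → ℝⁿ` with `x′(t) = f(x(t))` and `x(t) ∈ H`
for all `t ≥ 0`. -/
def IsGlobalSolutionOn {n : ℕ}
    (f : EuclideanSpace ℝ (Fin n) → EuclideanSpace ℝ (Fin n))
    (h : EuclideanSpace ℝ (Fin n) → ℝ) (x : ℝ → EuclideanSpace ℝ (Fin n)) : Prop :=
  ∀ t : ℝ, 0 ≤ t → HasDerivWithinAt x (f (x t)) (Set.Ici 0) t ∧ h (x t) = 0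

/-!
Since `V` is nonincreasing along solutions, a solution starting where `V` lies below the minimum of
`V` on `H ∩ sphere 0 r` cannot cross that sphere; this is stability. Only finitely many points
`xᵢ*` occur, so the decay rate `ε ∏ ‖x - xᵢ*‖²` is positive on a punctured ball around `0`. A
solution remaining in that ball at distance at least `d` from `0` would make `V` decrease at a rate
bounded away from zero, although `V ≥ 0` on `H`. Hence it comes arbitrarily close to `0`, and
stability, applied from the moment it is close, makes it converge.
-/

open Set Filter Topology

section Lyapunov

variable {E : Type*} [NormedAddCommGroup E] [NormedSpace ℝ E]

/-- A solution of `ẋ = f(x)` for all times `t ≥ 0` that stays in `S`. It is encoded as a function on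
`ℝ` whose values at negative times are irrelevant; the derivative at `0` is one-sided. -/
structure IsForwardTrajectoryIn (f : E → E) (S : Set E) (x : ℝ → E) : Prop where
  isIntegralCurveOn : IsIntegralCurveOn x (fun _ ↦ f) (Ici 0)
  mapsTo : MapsTo x (Ici 0) S

/-- Lyapunov stability of the point `p` with respect to the solutions of `ẋ = f(x)` in `S`. Neither
`p ∈ S` nor `f p = 0` is part of the definition. -/
def IsLyapunovStableIn (f : E → E) (S : Set E) (p : E) : Prop :=
  ∀ r > 0, ∃ δ > 0, ∀ x : ℝ → E,
    IsForwardTrajectoryIn f S x → dist (x 0) p < δ → ∀ t ≥ (0 : ℝ), dist (x t) p < r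

/-- Local attractivity of the point `p` with respect to the solutions of `ẋ = f(x)` in `S`. -/
def IsLocallyAttractiveIn (f : E → E) (S : Set E) (p : E) : Prop :=
  ∃ δ > 0, ∀ x : ℝ → E,
    IsForwardTrajectoryIn f S x → dist (x 0) p < δ → Tendsto x atTop (𝓝 p)

variable {f : E → E} {S : Set E} {p : E} {V : E → ℝ}

namespace IsForwardTrajectoryIn

variable {x : ℝ → E}

theorem comp_add (hx : IsForwardTrajectoryIn f S x) {s : ℝ} (hs : 0 ≤ s) :
    IsForwardTrajectoryIn f S fun t ↦ x (t + s) where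
  isIntegralCurveOn := (hx.isIntegralCurveOn.comp_add s).mono fun t ht ↦ by
    simpa [mem_vadd_set_iff_neg_vadd_mem, add_comm] using add_nonneg ht hs
  mapsTo _ ht := hx.mapsTo (add_nonneg ht hs)

theorem image_sub_le_mul_sub_of_fderiv_le (hx : IsForwardTrajectoryIn f S x)
    (hV : Differentiable ℝ V) {C : ℝ} (hC : ∀ t ≥ 0, fderiv ℝ V (x t) (f (x t)) ≤ C)
    {s t : ℝ} (hs : 0 ≤ s) (hst : s ≤ t) : V (x t) - V (x s) ≤ C * (t - s) := by
  have hderiv : ∀ u > 0, HasDerivAt (V ∘ x) (fderiv ℝ V (x u) (f (x u))) u := fun u hu ↦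
    (hV (x u)).hasFDerivAt.comp_hasDerivAt u
      ((hx.isIntegralCurveOn u hu.le).hasDerivAt (Ici_mem_nhds hu))
  refine (convex_Ici 0).image_sub_le_mul_sub_of_deriv_le
    (hV.continuous.comp_continuousOn hx.isIntegralCurveOn.continuousOn) ?_ ?_
    s hs t (hs.trans hst) hst <;> rw [interior_Ici]
  · exact fun u hu ↦ (hderiv u hu).differentiableAt.differentiableWithinAt
  · exact fun u hu ↦ (hderiv u hu).deriv.trans_le (hC u hu.le)

theorem exists_lt_fderiv_of_bddBelow (hx : IsForwardTrajectoryIn f S x)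
    (hV : Differentiable ℝ V) (hVS : BddBelow (V '' S)) {C : ℝ} (hC : C < 0) :
    ∃ t ≥ 0, C < fderiv ℝ V (x t) (f (x t)) := by
  obtain ⟨b, hb⟩ := hVS
  by_contra! hle
  have hVx_atBot : Tendsto (fun t ↦ V (x 0) + C * t) atTop atBot :=
    tendsto_atBot_add_const_left _ _ (tendsto_id.const_mul_atTop_of_neg hC)
  obtain ⟨t, hlt, ht⟩ :=
    ((hVx_atBot.eventually_lt_atBot b).and (eventually_ge_atTop 0)).exists
  have hdecay := hx.image_sub_le_mul_sub_of_fderiv_le hV hle le_rfl ht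
  linarith [hb (mem_image_of_mem V (hx.mapsTo ht))]

end IsForwardTrajectoryIn

theorem IsLyapunovStableIn.tendsto_of_forall_exists_dist_lt (hp : IsLyapunovStableIn f S p)
    {x : ℝ → E} (hx : IsForwardTrajectoryIn f S x) (hclose : ∀ d > 0, ∃ t ≥ 0, dist (x t) p < d) :
    Tendsto x atTop (𝓝 p) := by
  refine Metric.tendsto_atTop.2 fun r hr ↦ ?_
  obtain ⟨δ, hδ, hstay⟩ := hp r hr
  obtain ⟨s, hs, hsδ⟩ := hclose δ hδ
  refine ⟨s, fun t hst ↦ ?_⟩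
  simpa using hstay _ (hx.comp_add hs) (by simpa using hsδ) (t - s) (sub_nonneg.2 hst)

variable [ProperSpace E]

theorem isLyapunovStableIn_of_fderiv_nonpos (hS : IsClosed S) (hV : Differentiable ℝ V)
    (hVmin : ∀ y ∈ S, y ≠ p → V p < V y) (hVdot : ∀ y ∈ S, fderiv ℝ V y (f y) ≤ 0) :
    IsLyapunovStableIn f S p := by
  intro r hr
  obtain ⟨m, hpm, hm⟩ : ∃ m, V p < m ∧ ∀ y ∈ Metric.sphere p r ∩ S, m ≤ V y :=
    ((isCompact_sphere p r).inter_right hS).exists_forall_le' hV.continuous.continuousOn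
      fun y hy ↦ hVmin y hy.2 (Metric.ne_of_mem_sphere hy.1 hr.ne')
  obtain ⟨δ, hδ, hδm⟩ := Metric.eventually_nhds_iff.1
    (hV.continuous.continuousAt.eventually_lt_const hpm)
  refine ⟨min δ r, lt_min hδ hr, fun x hx hx0 t ht ↦ ?_⟩
  by_contra! hrt
  have hcont : ContinuousOn (fun s ↦ dist (x s) p) (Icc 0 t) :=
    (continuous_id.dist continuous_const).comp_continuousOn
      (hx.isIntegralCurveOn.continuousOn.mono Icc_subset_Ici_self)
  obtain ⟨s, hs, hsr⟩ : ∃ s ∈ Icc 0 t, dist (x s) p = r :=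
    intermediate_value_Icc ht hcont ⟨(hx0.trans_le (min_le_right δ r)).le, hrt⟩
  have hVs : V (x s) ≤ V (x 0) := by
    simpa using hx.image_sub_le_mul_sub_of_fderiv_le hV
      (fun u hu ↦ hVdot _ (hx.mapsTo hu)) le_rfl hs.1
  have hV0 : V (x 0) < m := hδm (hx0.trans_le (min_le_left δ r))
  exact (hVs.trans_lt hV0).not_ge (hm _ ⟨hsr, hx.mapsTo hs.1⟩)

theorem IsLyapunovStableIn.isLocallyAttractiveIn_of_fderiv_le_neg (hp : IsLyapunovStableIn f S p)
    (hS : IsClosed S) (hV : Differentiable ℝ V) (hVS : BddBelow (V '' S)) {W : E → ℝ}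
    (hW : ContinuousOn W S) (hWpos : ∀ᶠ y in 𝓝[S \ {p}] p, 0 < W y)
    (hVdot : ∀ y ∈ S, fderiv ℝ V y (f y) ≤ -W y) : IsLocallyAttractiveIn f S p := by
  obtain ⟨r, hr, hrW⟩ := Metric.nhds_basis_closedBall.eventually_iff.1
    (eventually_nhdsWithin_iff.1 hWpos)
  obtain ⟨δ, hδ, hstay⟩ := hp r hr
  refine ⟨δ, hδ, fun x hx hx0 ↦ hp.tendsto_of_forall_exists_dist_lt hx fun d hd ↦ ?_⟩
  let K : Set E := (Metric.closedBall p r \ Metric.ball p d) ∩ S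
  have hK : IsCompact K :=
    ((isCompact_closedBall p r).diff Metric.isOpen_ball).inter_right hS
  obtain ⟨c, hc, hcW⟩ : ∃ c, 0 < c ∧ ∀ y ∈ K, c ≤ W y :=
    hK.exists_forall_le' (hW.mono inter_subset_right) fun y hy ↦
      hrW hy.1.1 ⟨hy.2, fun hyp : y = p ↦ hy.1.2 (hyp ▸ Metric.mem_ball_self hd)⟩
  obtain ⟨t, ht, hct⟩ := hx.exists_lt_fderiv_of_bddBelow hV hVS (neg_neg_of_pos hc)
  refine ⟨t, ht, ?_⟩
  by_contra! hdt
  have hcWt : c ≤ W (x t) :=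
    hcW _ ⟨⟨(hstay x hx hx0 t ht).le, fun hball ↦ hdt.not_gt hball⟩, hx.mapsTo ht⟩
  linarith [hVdot _ (hx.mapsTo ht)]

theorem eventually_nhdsNE_prod_norm_sub_sq_pos {F ι : Type*} [NormedAddCommGroup F] [Fintype ι]
    (xs : ι → F) (p : F) : ∀ᶠ y in 𝓝[≠] p, 0 < ∏ i, ‖y - xs i‖ ^ 2 := by
  have hne : ∀ᶠ y in 𝓝[≠] p, ∀ i, y ≠ xs i := by
    filter_upwards [nhdsNE_of_nhdsNE_sdiff_finite univ_mem (finite_range xs)] with y hy i hyi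
    exact hy.2 ⟨i, hyi.symm⟩
  filter_upwards [hne] with y hy
  exact Finset.prod_pos fun i _ ↦ pow_pos (norm_sub_pos_iff.2 (hy i)) 2

theorem stmt_0_general {ι : Type*} [Fintype ι] (hS : IsClosed S) (xs : ι → E)
    (hV : Differentiable ℝ V) (hVmin : ∀ y ∈ S, y ≠ p → V p < V y) {ε : ℝ} (hε : 0 < ε)
    (hVdot : ∀ y ∈ S, fderiv ℝ V y (f y) ≤ -ε * ∏ i, ‖y - xs i‖ ^ 2) :
    IsLyapunovStableIn f S p ∧ IsLocallyAttractiveIn f S p := by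
  have hVdot_nonpos : ∀ y ∈ S, fderiv ℝ V y (f y) ≤ 0 := fun y hy ↦
    (hVdot y hy).trans (mul_nonpos_of_nonpos_of_nonneg (neg_nonpos.2 hε.le) (by positivity))
  have hVS : BddBelow (V '' S) := ⟨V p, forall_mem_image.2 fun y hy ↦ by
    rcases eq_or_ne y p with rfl | hyp
    exacts [le_rfl, (hVmin y hy hyp).le]⟩
  have hstable := isLyapunovStableIn_of_fderiv_nonpos hS hV hVmin hVdot_nonpos
  have hrate_pos : ∀ᶠ y in 𝓝[S \ {p}] p, 0 < ε * ∏ i, ‖y - xs i‖ ^ 2 :=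
    ((eventually_nhdsNE_prod_norm_sub_sq_pos xs p).filter_mono
      (nhdsWithin_mono p fun _ hy ↦ hy.2)).mono fun _ hy ↦ mul_pos hε hy
  exact ⟨hstable, hstable.isLocallyAttractiveIn_of_fderiv_le_neg hS hV hVS (by fun_prop)
    hrate_pos (by simpa only [neg_mul] using hVdot)⟩

end Lyapunov

theorem isGlobalSolutionOn_iff_isForwardTrajectoryIn {n : ℕ}
    {f : EuclideanSpace ℝ (Fin n) → EuclideanSpace ℝ (Fin n)} {h : EuclideanSpace ℝ (Fin n) → ℝ}
    {x : ℝ → EuclideanSpace ℝ (Fin n)} :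
    IsGlobalSolutionOn f h x ↔ IsForwardTrajectoryIn f (h ⁻¹' {0}) x :=
  ⟨fun hx ↦ ⟨fun t ht ↦ (hx t ht).1, fun t ht ↦ (hx t ht).2⟩,
    fun hx t ht ↦ ⟨hx.isIntegralCurveOn t ht, hx.mapsTo ht⟩⟩

theorem stmt_0 (n k : ℕ) (hk : 0 < k)
    (f : EuclideanSpace ℝ (Fin n) → EuclideanSpace ℝ (Fin n)) (hf : Continuous f)
    (h : EuclideanSpace ℝ (Fin n) → ℝ) (hh : Continuous h)
    (h0 : h 0 = 0)
    (xs : Fin k → EuclideanSpace ℝ (Fin n))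
    (hxs0 : xs ⟨0, hk⟩ = 0)
    (hxsH : ∀ i, h (xs i) = 0)
    (hxs_distinct : Function.Injective xs)
    (hxs_eq : ∀ i, f (xs i) = 0)
    (V : EuclideanSpace ℝ (Fin n) → ℝ) (hV : ContDiff ℝ 1 V)
    (hV0 : V 0 = 0)
    (hVpos : ∀ x, h x = 0 → x ≠ 0 → 0 < V x)
    (ε : ℝ) (hε : 0 < ε)
    (hVdot : ∀ x, h x = 0 →
      ⟪gradient V x, f x⟫ ≤ -ε * ∏ i : Fin k, ‖x - xs i‖ ^ 2) :
    (∀ r > 0, ∃ δ > 0, ∀ x : ℝ → EuclideanSpace ℝ (Fin n),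
        IsGlobalSolutionOn f h x → ‖x 0‖ < δ → ∀ t ≥ (0 : ℝ), ‖x t‖ < r) ∧
    (∃ δ > 0, ∀ x : ℝ → EuclideanSpace ℝ (Fin n),
        IsGlobalSolutionOn f h x → ‖x 0‖ < δ →
        Filter.Tendsto x Filter.atTop (nhds 0)) := by
  have hVmin : ∀ y ∈ h ⁻¹' {0}, y ≠ 0 → V 0 < V y := fun y hy ↦ hV0.symm ▸ hVpos y hy
  have hVdecay : ∀ y ∈ h ⁻¹' {0}, fderiv ℝ V y (f y) ≤ -ε * ∏ i, ‖y - xs i‖ ^ 2 := fun y hy ↦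
    inner_gradient_left.symm.trans_le (hVdot y hy)
  simpa only [IsLyapunovStableIn, IsLocallyAttractiveIn, dist_zero_right,
    ← isGlobalSolutionOn_iff_isForwardTrajectoryIn] using
    stmt_0_general (isClosed_singleton.preimage hh) xs (hV.differentiable one_ne_zero)
      hVmin hε hVdecay
end

section
/- Let f : ℝⁿ → ℝⁿ be continuously differentiable, h : ℝⁿ → ℝ continuously differentiable with ∇h(x) ≠ 0 for all x ∈ H, and H = {x ∈ ℝⁿ : h(x) = 0} with 0 ∈ H. Let x₁* = 0, x₂*, …, x_k* ∈ H be pairwise distinct and suppose {x ∈ H : f(x) = 0} = {x₁*, …, x_k*}. Assume: (a) for each j = 2, …, k there exist v ∈ ℝⁿ with v ≠ 0 and ⟨∇h(x_j*), v⟩ = 0, and λ > 0, such that Df(x_j*) v = λ v; (b) there is a continuously differentiable V : ℝⁿ → ℝ with V(0) = 0, V(x) > 0 for every x ∈ H with x ≠ 0, V radially unbounded on H (for every M > 0 there is R > 0 such that x ∈ H and ‖x‖ > R imply V(x) > M), and there exists ε > 0 with ⟨∇V(x), f(x)⟩ ≤ −ε · ∏_{i=1}^{k} ‖x − xᵢ*‖²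 for all x ∈ H. Then 0 is Lyapunov stable for solutions on H, and the set B = {x₀ ∈ H : there exists a global solution on H with x(0) = x₀ and x(t) does not converge to 0 as t → ∞} has (n−1)-dimensional Hausdorff measure zero. -/
open scoped RealInnerProductSpace

open Set Filter Topology MeasureTheory Module

open scoped NNReal

/-!
Along a solution, `V` decreases strictly away from the equilibria, so Barbalat's lemma puts every
limit point of the trajectory among the finitely many equilibria, and by connectedness the
trajectory converges to one of them. It remains to see that the solutions converging to an unstable
equilibrium `p` start in a null set.

Let `A` be the derivative of `f` at `p`, with `A v = λ v` and `λ > 0`. For all but finitely many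
`c ∈ (0, 2λ)` there is a bilinear form `B` with `B (A w) w + B w (A w) = c B w w + ‖w‖²`; the bound
`c < 2λ` gives `B v v > 0`. Near `p` the function `q t = B (x t - y t) (x t - y t)` of two solutions
satisfies `q' ≥ c q`, and it is bounded if both solutions stay near `p` for all time; hence
`q 0 ≤ 0`. Since `x 0 - y 0` is also nearly orthogonal to `∇h p`, it makes a definite angle with
the plane spanned by `∇h p` and `v`. So the projection along this plane has a Lipschitz inverse on
the set of starting points of such solutions, which is thus null in every dimension above
`dim E - 2`. A general solution converging to `p` enters such a set after some integer time, and
the backward flow is Lipschitz by Grönwall's inequality.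
-/

lemma exists_tendsto_of_finite_setOf_mapClusterPt {X : Type*} [TopologicalSpace X] [T2Space X]
    {x : ℝ → X} {a : ℝ} {K : Set X} (hx : ContinuousOn x (Ici a)) (hK : IsCompact K)
    (hxK : MapsTo x (Ici a) K) (hfin : {p | MapClusterPt p atTop x}.Finite) :
    ∃ p, Tendsto x atTop (𝓝 p) := by
  have hmem : ∀ᶠ t in atTop, x t ∈ K := (eventually_ge_atTop a).mono hxK
  obtain ⟨p, -, hp⟩ := hK.exists_mapClusterPt_of_frequently hmem.frequently
  obtain ⟨U, W, hU, hW, hpU, hrestW, hUW⟩ :=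
    SeparatedNhds.of_finite (finite_singleton p) (hfin.sdiff (t := {p})) disjoint_sdiff_right
  have hUW_eventually : ∀ᶠ t in atTop, x t ∈ U ∪ W := by
    refine (hK.tendsto_nhdsSet_of_mapClusterPt (s' := {q | MapClusterPt q atTop x}) hmem
      fun q _ hq ↦ hq).eventually_mem ((hU.union hW).mem_nhdsSet.2 fun q hq ↦ ?_)
    by_cases hqp : q = p
    · exact .inl (hqp ▸ hpU rfl)
    · exact .inr (hrestW ⟨hq, hqp⟩)
  obtain ⟨T, hT⟩ := eventually_atTop.1 (hUW_eventually.and (eventually_ge_atTop a))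
  have hstay : x '' Ici T ⊆ U := by
    obtain ⟨t, htU, ht⟩ :=
      ((hp.frequently (hU.mem_nhds (hpU rfl))).and_eventually (eventually_ge_atTop T)).exists
    have hconn : IsPreconnected (x '' Ici T) :=
      isPreconnected_Ici.image x (hx.mono (Ici_subset_Ici.2 (hT T le_rfl).2))
    exact hconn.subset_left_of_subset_union hU hW hUW
      (image_subset_iff.2 fun s hs ↦ (hT s hs).1) ⟨x t, mem_image_of_mem x ht, htU⟩
  refine ⟨p, hK.tendsto_nhds_of_unique_mapClusterPt hmem fun q _ hq ↦ ?_⟩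
  by_contra hqp
  obtain ⟨t, htW, ht⟩ := ((hq.frequently (hW.mem_nhds (hrestW ⟨hq, hqp⟩))).and_eventually
    (eventually_ge_atTop T)).exists
  exact disjoint_left.1 hUW (hstay (mem_image_of_mem x ht)) htW

lemma tendsto_zero_of_hasDerivWithinAt_of_uniformContinuousOn {F : Type*} [NormedAddCommGroup F]
    [NormedSpace ℝ F] {g g' : ℝ → F} {a : ℝ} {l : F}
    (hg : ∀ t ∈ Ici a, HasDerivWithinAt g (g' t) (Ici a) t)
    (hg' : UniformContinuousOn g' (Ici a)) (hl : Tendsto g atTop (𝓝 l)) :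
    Tendsto g' atTop (𝓝 0) := by
  refine Metric.tendsto_nhds.2 fun ε hε ↦ ?_
  obtain ⟨δ, hδ, hgδ⟩ := Metric.uniformContinuousOn_iff.1 hg' (ε / 2) (half_pos hε)
  set τ := δ / 2
  have hτ : 0 < τ := half_pos hδ
  have hincr : Tendsto (fun t ↦ g (t + τ) - g t) atTop (𝓝 0) := by
    simpa using (hl.comp (tendsto_atTop_add_const_right _ τ tendsto_id)).sub hl
  have hsmall : ∀ᶠ t in atTop, ‖g (t + τ) - g t‖ < ε / 2 * τ :=
    hincr.norm.eventually_lt_const (by simpa using by positivity)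
  filter_upwards [hsmall, eventually_ge_atTop a] with t ht hat
  have hsub : Icc t (t + τ) ⊆ Ici a := Icc_subset_Ici_self.trans (Ici_subset_Ici.2 hat)
  have htaylor : ‖g (t + τ) - (t + τ) • g' t - (g t - t • g' t)‖ ≤ ε / 2 * ‖t + τ - t‖ := by
    refine (convex_Icc t (t + τ)).norm_image_sub_le_of_norm_hasDerivWithin_le
      (f := fun s ↦ g s - s • g' t) (f' := fun s ↦ g' s - (1 : ℝ) • g' t)
      (fun s hs ↦ ((hg s (hsub hs)).mono hsub).sub
        ((hasDerivWithinAt_id s _).smul_const (g' t))) (fun s hs ↦ ?_)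
      (left_mem_Icc.2 (by linarith)) (right_mem_Icc.2 (by linarith))
    rw [one_smul, ← dist_eq_norm]
    refine (hgδ s (hsub hs) t hat ?_).le
    rw [Real.dist_eq, abs_of_nonneg (by linarith [hs.1])]
    linarith [hs.2, show τ < δ from half_lt_self hδ]
  rw [add_sub_cancel_left, Real.norm_of_nonneg hτ.le] at htaylor
  have hτg' : τ * ‖g' t‖ ≤ ‖g (t + τ) - g t‖ + ε / 2 * τ := by
    have hsplit : τ • g' t =
        (g (t + τ) - g t) - (g (t + τ) - (t + τ) • g' t - (g t - t • g' t)) := by module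
    calc τ * ‖g' t‖ = ‖τ • g' t‖ := by rw [norm_smul, Real.norm_of_nonneg hτ.le]
      _ ≤ _ := hsplit ▸ (norm_sub_le _ _).trans (by gcongr)
  rw [dist_zero_right]
  nlinarith

lemma isBounded_image_Ici_of_tendsto {X : Type*} [PseudoMetricSpace X] {x : ℝ → X} {a : ℝ} {p : X}
    (hx : ContinuousOn x (Ici a)) (hlim : Tendsto x atTop (𝓝 p)) :
    Bornology.IsBounded (x '' Ici a) := by
  obtain ⟨T, hT⟩ := eventually_atTop.1 (hlim.eventually (Metric.ball_mem_nhds p one_pos))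
  have hinitial : Bornology.IsBounded (x '' Icc a T) :=
    (isCompact_Icc.image_of_continuousOn (hx.mono Icc_subset_Ici_self)).isBounded
  refine (hinitial.union (Metric.isBounded_ball (x := p) (r := 1))).subset ?_
  rintro _ ⟨t, ht, rfl⟩
  rcases le_total t T with htT | hTt
  · exact .inl (mem_image_of_mem x ⟨ht, htT⟩)
  · exact .inr (hT t hTt)

/-- A solution of `x' = f x` on `[0, ∞)` that stays in `S`. Since the derivative is taken within
`[0, ∞)`, it is one-sided at `0`, and `x` is unconstrained at negative times. -/
structure IsForwardSolutionIn {E : Type*} [NormedAddCommGroup E] [NormedSpace ℝ E]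
    (f : E → E) (S : Set E) (x : ℝ → E) : Prop where
  isIntegralCurveOn : IsIntegralCurveOn x (fun _ ↦ f) (Ici 0)
  mapsTo : MapsTo x (Ici 0) S

lemma map_nonpos_of_ne_zero_imp_neg {M N F : Type*} [Zero M] [Zero N] [Preorder N] [FunLike F M N]
    [ZeroHomClass F M N] {φ : F} {w : M} (hw : w ≠ 0 → φ w < 0) : φ w ≤ 0 := by
  rcases eq_or_ne w 0 with rfl | hw0
  · exact (map_zero φ).le
  · exact (hw hw0).le

namespace IsForwardSolutionIn

variable {E : Type*} [NormedAddCommGroup E] [NormedSpace ℝ E] {f : E → E} {S K : Set E}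
  {V : E → ℝ} {x y : ℝ → E}

lemma continuousOn (hx : IsForwardSolutionIn f S x) : ContinuousOn x (Ici 0) :=
  hx.isIntegralCurveOn.continuousOn

lemma comp_const_add (hx : IsForwardSolutionIn f S x) {T : ℝ} (hT : 0 ≤ T)
    (hxK : MapsTo x (Ici T) K) : IsForwardSolutionIn f K fun t ↦ x (T + t) where
  isIntegralCurveOn t (ht : 0 ≤ t) := by
    have hshift : HasDerivWithinAt (fun s ↦ T + s) 1 (Ici 0) t :=
      ((hasDerivAt_id t).const_add T).hasDerivWithinAt
    simpa [Function.comp_def] using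
      (hx.isIntegralCurveOn (T + t) (mem_Ici.2 (by positivity))).scomp t hshift
        fun s (hs : 0 ≤ s) ↦ mem_Ici.2 (by positivity)
  mapsTo t ht := hxK (mem_Ici.2 (le_add_of_nonneg_right ht))

lemma hasDerivWithinAt_comp (hx : IsForwardSolutionIn f S x) (hV : Differentiable ℝ V) {t : ℝ}
    (ht : 0 ≤ t) : HasDerivWithinAt (V ∘ x) (fderiv ℝ V (x t) (f (x t))) (Ici 0) t :=
  (hV (x t)).hasFDerivAt.comp_hasDerivWithinAt t (hx.isIntegralCurveOn t ht)

lemma antitoneOn_comp (hx : IsForwardSolutionIn f S x) (hV : Differentiable ℝ V)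
    (hVf : ∀ z ∈ S, fderiv ℝ V z (f z) ≤ 0) : AntitoneOn (V ∘ x) (Ici 0) :=
  antitoneOn_of_hasDerivWithinAt_nonpos (convex_Ici 0)
    (hV.continuous.comp_continuousOn hx.continuousOn)
    (fun _ ht ↦ (hx.hasDerivWithinAt_comp hV (interior_subset ht)).mono interior_subset)
    fun _ ht ↦ hVf _ (hx.mapsTo (interior_subset ht))

lemma exists_lipschitzOnWith (hx : IsForwardSolutionIn f K x) (hK : IsCompact K)
    (hf : Continuous f) : ∃ C : ℝ≥0, LipschitzOnWith C x (Ici 0) := by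
  obtain ⟨C, hC⟩ := hK.exists_bound_of_continuousOn hf.continuousOn
  exact ⟨C.toNNReal, (convex_Ici 0).lipschitzOnWith_of_nnnorm_hasDerivWithin_le
    hx.isIntegralCurveOn fun t ht ↦ NNReal.le_toNNReal_of_coe_le (hC _ (hx.mapsTo ht))⟩

lemma exists_tendsto_comp (hx : IsForwardSolutionIn f K x) (hK : IsCompact K)
    (hV : Differentiable ℝ V) (hVf : ∀ z ∈ K, fderiv ℝ V z (f z) ≤ 0) :
    ∃ l, Tendsto (V ∘ x) atTop (𝓝 l) := by
  have hanti : Antitone fun t ↦ V (x (max t 0)) := fun s t hst ↦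
    hx.antitoneOn_comp hV hVf (le_max_right s 0) (le_max_right t 0) (max_le_max_right 0 hst)
  have hbdd : BddBelow (range fun t ↦ V (x (max t 0))) :=
    (hK.bddBelow_image hV.continuous.continuousOn).mono <|
      range_subset_iff.2 fun t ↦ mem_image_of_mem V (hx.mapsTo (le_max_right t 0))
  refine ⟨_, (tendsto_atTop_ciInf hanti hbdd).congr' ?_⟩
  filter_upwards [eventually_ge_atTop 0] with t ht
  simp [max_eq_left ht]

lemma tendsto_fderiv_comp_zero (hx : IsForwardSolutionIn f K x) (hK : IsCompact K)
    (hf : Continuous f) (hV : ContDiff ℝ 1 V) (hVf : ∀ z ∈ K, fderiv ℝ V z (f z) ≤ 0) :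
    Tendsto (fun t ↦ fderiv ℝ V (x t) (f (x t))) atTop (𝓝 0) := by
  have hVd : Differentiable ℝ V := hV.differentiable one_ne_zero
  obtain ⟨l, hl⟩ := hx.exists_tendsto_comp hK hVd hVf
  obtain ⟨C, hC⟩ := hx.exists_lipschitzOnWith hK hf
  have hcont : Continuous fun z ↦ fderiv ℝ V z (f z) :=
    (hV.continuous_fderiv one_ne_zero).clm_apply hf
  exact tendsto_zero_of_hasDerivWithinAt_of_uniformContinuousOn
    (fun t ht ↦ hx.hasDerivWithinAt_comp hVd ht)
    ((hK.uniformContinuousOn_of_continuous hcont.continuousOn).comp hC.uniformContinuousOn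
      hx.mapsTo) hl

lemma exists_tendsto_equilibrium (hx : IsForwardSolutionIn f K x) (hK : IsCompact K)
    (hf : Continuous f) (hV : ContDiff ℝ 1 V)
    (hVf : ∀ z ∈ K, f z ≠ 0 → fderiv ℝ V z (f z) < 0) (hfin : {z ∈ K | f z = 0}.Finite) :
    ∃ p ∈ K, f p = 0 ∧ Tendsto x atTop (𝓝 p) := by
  have hVf_nonpos : ∀ z ∈ K, fderiv ℝ V z (f z) ≤ 0 := fun z hz ↦
    map_nonpos_of_ne_zero_imp_neg (hVf z hz)
  have hmem : ∀ᶠ t in atTop, x t ∈ K := (eventually_ge_atTop 0).mono hx.mapsTo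
  have hcluster : {p | MapClusterPt p atTop x} ⊆ {z ∈ K | f z = 0} := fun p hp ↦ by
    have hpK : p ∈ K := hK.isClosed.mem_of_mapClusterPt hp hmem
    have hVfp : MapClusterPt (fderiv ℝ V p (f p)) atTop fun t ↦ fderiv ℝ V (x t) (f (x t)) :=
      MapClusterPt.continuousAt_comp (f := fun z ↦ fderiv ℝ V z (f z))
        ((hV.continuous_fderiv one_ne_zero).clm_apply hf).continuousAt hp
    have hzero : fderiv ℝ V p (f p) = 0 :=
      eq_of_nhds_neBot
        (ClusterPt.mono hVfp (hx.tendsto_fderiv_comp_zero hK hf hV hVf_nonpos))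
    exact ⟨hpK, by_contra fun hfp ↦ (hVf p hpK hfp).ne hzero⟩
  obtain ⟨p, hp⟩ := exists_tendsto_of_finite_setOf_mapClusterPt hx.continuousOn hK hx.mapsTo
    (hfin.subset hcluster)
  exact ⟨p, (hcluster hp.mapClusterPt).1, (hcluster hp.mapClusterPt).2, hp⟩

lemma exists_tendsto_equilibrium_of_isBounded_sublevel [ProperSpace E]
    (hx : IsForwardSolutionIn f S x) (hS : IsClosed S) (hf : Continuous f) (hV : ContDiff ℝ 1 V)
    (hVf : ∀ z ∈ S, f z ≠ 0 → fderiv ℝ V z (f z) < 0) (hfin : {z ∈ S | f z = 0}.Finite)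
    (hbdd : ∀ M, Bornology.IsBounded {z ∈ S | V z ≤ M}) :
    ∃ p ∈ S, f p = 0 ∧ Tendsto x atTop (𝓝 p) := by
  have hanti : AntitoneOn (V ∘ x) (Ici 0) :=
    hx.antitoneOn_comp (hV.differentiable one_ne_zero) fun z hz ↦
      map_nonpos_of_ne_zero_imp_neg (hVf z hz)
  have hsublevel : IsForwardSolutionIn f {z ∈ S | V z ≤ V (x 0)} x :=
    ⟨hx.isIntegralCurveOn, fun t ht ↦ ⟨hx.mapsTo ht, hanti self_mem_Ici ht ht⟩⟩
  obtain ⟨p, hp, hfp, hlim⟩ := hsublevel.exists_tendsto_equilibrium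
    (Metric.isCompact_of_isClosed_isBounded
      (hS.inter (isClosed_le hV.continuous continuous_const)) (hbdd _))
    hf hV (fun z hz ↦ hVf z hz.1) (hfin.subset fun z hz ↦ ⟨hz.1.1, hz.2⟩)
  exact ⟨p, hp.1, hfp, hlim⟩

lemma dist_le_mul_exp (hx : IsForwardSolutionIn f S x) (hy : IsForwardSolutionIn f S y)
    {L : ℝ≥0} (hf : LipschitzOnWith L f S) {T : ℝ} (hT : 0 ≤ T) :
    dist (x 0) (y 0) ≤ dist (x T) (y T) * Real.exp (L * T) := by
  have hreverse : MapsTo (fun t ↦ T - t) (Icc 0 T) (Ici 0) := fun t ht ↦ sub_nonneg.2 ht.2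
  have hcont : ∀ {z}, IsForwardSolutionIn f S z → ContinuousOn (fun t ↦ z (T - t)) (Icc 0 T) :=
    fun hz ↦ hz.continuousOn.comp (by fun_prop) hreverse
  have hderiv : ∀ {z}, IsForwardSolutionIn f S z → ∀ t ∈ Ico 0 T,
      HasDerivWithinAt (fun t ↦ z (T - t)) (-f (z (T - t))) (Ici t) t := fun {z} hz t ht ↦ by
    have hpos : 0 < T - t := sub_pos.2 ht.2
    exact (((hz.isIntegralCurveOn _ hpos.le).hasDerivAt
      (Ici_mem_nhds hpos)).comp_const_sub T t).hasDerivWithinAt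
  have hmaps : ∀ {z}, IsForwardSolutionIn f S z → ∀ t ∈ Ico 0 T, z (T - t) ∈ S :=
    fun hz t ht ↦ hz.mapsTo (hreverse (Ico_subset_Icc_self ht))
  simpa using dist_le_of_trajectories_ODE_of_mem (v := fun _ z ↦ -f z) (s := fun _ ↦ S)
    (fun _ _ ↦ hf.neg) (hcont hx) (hderiv hx) (hmaps hx) (hcont hy) (hderiv hy) (hmaps hy)
    (by simp) T (right_mem_Icc.2 hT)

end IsForwardSolutionIn

lemma exists_pos_forall_dist_lt_of_comp_le {X : Type*} [PseudoMetricSpace X] [ProperSpace X]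
    {S : Set X} {V : X → ℝ} {p : X} (hS : IsClosed S) (hV : Continuous V)
    (hVp : ∀ z ∈ S, z ≠ p → V p < V z) {r : ℝ} (hr : 0 < r) :
    ∃ δ > 0, ∀ x : ℝ → X, ContinuousOn x (Ici 0) → MapsTo x (Ici 0) S →
      (∀ t, 0 ≤ t → V (x t) ≤ V (x 0)) → dist (x 0) p < δ → ∀ t, 0 ≤ t → dist (x t) p < r := by
  have hcompact : IsCompact (Metric.sphere p r ∩ S) := (isCompact_sphere p r).inter_right hS
  obtain ⟨m, hpm, hm⟩ : ∃ m, V p < m ∧ ∀ z ∈ Metric.sphere p r ∩ S, m ≤ V z :=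
    hcompact.exists_forall_le' hV.continuousOn fun z hz ↦
      hVp z hz.2 (Metric.ne_of_mem_sphere hz.1 hr.ne')
  obtain ⟨δ, hδ, hδm⟩ := Metric.eventually_nhds_iff.1 (hV.continuousAt.eventually_lt_const hpm)
  refine ⟨min δ r, lt_min hδ hr, fun x hx hxS hVx hx0 t ht ↦ ?_⟩
  by_contra! hrt
  obtain ⟨s, hs, hsr⟩ : r ∈ (fun s ↦ dist (x s) p) '' Icc 0 t :=
    intermediate_value_Icc ht
      ((continuous_id.dist continuous_const).comp_continuousOn (hx.mono Icc_subset_Ici_self))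
      ⟨(hx0.trans_le (min_le_right _ _)).le, hrt⟩
  have hVs : V (x s) < m := (hVx s hs.1).trans_lt (hδm (hx0.trans_le (min_le_left _ _)))
  exact hVs.not_ge (hm _ ⟨hsr, hxS hs.1⟩)

section LyapunovEquation

lemma exists_mem_exists_end_apply_eq_smul_add {K M : Type*} [Field K] [AddCommGroup M]
    [Module K M] [FiniteDimensional K M] (L : Module.End K M) (q : M) {s : Set K}
    (hs : s.Infinite) : ∃ c ∈ s, ∃ b, L b = c • b + q := by
  obtain ⟨c, hcs, hcL⟩ := (hs.sdiff (Module.End.finite_spectrum L)).nonempty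
  obtain ⟨b, hb⟩ := ((Module.End.isUnit_iff _).1 (spectrum.notMem_iff.1 hcL)).surjective (-q)
  refine ⟨c, hcs, b, ?_⟩
  rw [LinearMap.sub_apply, Module.algebraMap_end_apply] at hb
  rw [← sub_eq_iff_eq_add', ← neg_sub, hb, neg_neg]

variable {E : Type*} [NormedAddCommGroup E] [NormedSpace ℝ E]

lemma exists_shifted_lyapunov_equation [FiniteDimensional ℝ E] (A : E →L[ℝ] E)
    (Q : E →L[ℝ] E →L[ℝ] ℝ) {s : Set ℝ} (hs : s.Infinite) :
    ∃ c ∈ s, ∃ B : E →L[ℝ] E →L[ℝ] ℝ, ∀ u w, B (A u) w + B u (A w) = c * B u w + Q u w := by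
  let L : Module.End ℝ (E →L[ℝ] E →L[ℝ] ℝ) :=
    { toFun := fun B ↦ B.bilinearComp A (.id ℝ E) + B.bilinearComp (.id ℝ E) A
      map_add' := fun B C ↦ by ext; simp; abel
      map_smul' := fun r B ↦ by ext; simp }
  obtain ⟨c, hcs, B, hB⟩ := exists_mem_exists_end_apply_eq_smul_add L Q hs
  exact ⟨c, hcs, B, fun u w ↦ congrArg (fun C : E →L[ℝ] E →L[ℝ] ℝ ↦ C u w) hB⟩

lemma mul_le_apply_add_apply_of_norm_sub_le {A : E →L[ℝ] E} {B : E →L[ℝ] E →L[ℝ] ℝ} {c η : ℝ}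
    (hη : 2 * ‖B‖ * η ≤ 1) {u w : E} (hB : B (A w) w + B w (A w) = c * B w w + ‖w‖ ^ 2)
    (hu : ‖u - A w‖ ≤ η * ‖w‖) : c * B w w ≤ B w u + B u w := by
  have hleft : |B (u - A w) w| ≤ ‖B‖ * (η * ‖w‖) * ‖w‖ :=
    (B.le_opNorm₂ _ _).trans (by gcongr)
  have hright : |B w (u - A w)| ≤ ‖B‖ * ‖w‖ * (η * ‖w‖) :=
    (B.le_opNorm₂ _ _).trans (by gcongr)
  simp only [map_sub, sub_apply] at hleft hright
  nlinarith [(abs_le.1 hleft).1, (abs_le.1 hright).1,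
    mul_le_mul_of_nonneg_right hη (sq_nonneg ‖w‖)]

lemma exists_pos_mul_norm_le_norm_apply_of_apply_self_nonpos [FiniteDimensional ℝ E] {F : Type*}
    [NormedAddCommGroup F] [NormedSpace ℝ F] (B : E →L[ℝ] E →L[ℝ] ℝ) (T : E →L[ℝ] F)
    (hBT : ∀ w, T w = 0 → w ≠ 0 → 0 < B w w) :
    ∃ m > 0, ∀ w, B w w ≤ 0 → m * ‖w‖ ≤ ‖T w‖ := by
  have hcompact : IsCompact (Metric.sphere (0 : E) 1 ∩ {w | B w w ≤ 0}) :=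
    (isCompact_sphere 0 1).inter_right (isClosed_le (by fun_prop) continuous_const)
  obtain ⟨m, hm, hmT⟩ : ∃ m, 0 < m ∧ ∀ w ∈ Metric.sphere (0 : E) 1 ∩ {w | B w w ≤ 0}, m ≤ ‖T w‖ :=
    hcompact.exists_forall_le' (f := fun w ↦ ‖T w‖) (by fun_prop) fun w hw ↦
      norm_pos_iff.2 fun hTw ↦ (hBT w hTw (ne_zero_of_mem_unit_sphere ⟨w, hw.1⟩)).not_ge hw.2
  refine ⟨m, hm, fun w hw ↦ ?_⟩
  rcases eq_or_ne w 0 with rfl | hw0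
  · simp
  have hnorm : 0 < ‖w‖ := norm_pos_iff.2 hw0
  have hunit : m ≤ ‖T (‖w‖⁻¹ • w)‖ := by
    refine hmT _ ⟨by simp [norm_smul, hnorm.ne'], ?_⟩
    simp only [mem_ofPred_eq, map_smul, smul_apply, smul_eq_mul]
    have := inv_pos.2 hnorm
    exact mul_nonpos_of_nonneg_of_nonpos this.le (mul_nonpos_of_nonneg_of_nonpos this.le hw)
  rwa [map_smul, norm_smul, norm_inv, norm_norm, inv_mul_eq_div, le_div_iff₀ hnorm] at hunit

end LyapunovEquation

lemma nonpos_of_mul_le_hasDerivWithinAt_of_bddAbove {g g' : ℝ → ℝ} {c : ℝ} (hc : 0 < c)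
    (hg : ∀ t ∈ Ici 0, HasDerivWithinAt g (g' t) (Ici 0) t) (hg' : ∀ t ∈ Ici 0, c * g t ≤ g' t)
    (hbdd : BddAbove (g '' Ici 0)) : g 0 ≤ 0 := by
  obtain ⟨M, hM⟩ := hbdd
  have hexp : ∀ t, 0 ≤ t → g 0 * Real.exp (c * t) ≤ M := fun t ht ↦ by
    have hgronwall := le_gronwallBound_of_liminf_deriv_right_le (f := fun s ↦ -g s)
      (f' := fun s ↦ -g' s) (δ := -g 0) (K := c) (ε := 0) (a := 0) (b := t)
      (fun s hs ↦ ((hg s hs.1).neg.continuousWithinAt).mono Icc_subset_Ici_self)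
      (fun s hs r hr ↦ by
        simpa [slope_def_field, div_eq_inv_mul] using
          ((hg s hs.1).mono (Ici_subset_Ici.2 hs.1)).neg.liminf_right_slope_le hr)
      le_rfl (fun s hs ↦ by linarith [hg' s hs.1]) t (right_mem_Icc.2 ht)
    rw [gronwallBound_ε0, sub_zero] at hgronwall
    linarith [hM (mem_image_of_mem g (mem_Ici.2 ht))]
  by_contra! hpos
  have htend : Tendsto (fun t ↦ g 0 * Real.exp (c * t)) atTop atTop :=
    (Real.tendsto_exp_atTop.comp (tendsto_id.const_mul_atTop hc)).const_mul_atTop hpos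
  obtain ⟨t, hMt, ht⟩ :=
    ((htend.eventually_gt_atTop M).and (eventually_ge_atTop 0)).exists
  exact (hexp t ht).not_gt hMt

lemma IsForwardSolutionIn.apply_sub_sub_nonpos {E : Type*} [NormedAddCommGroup E]
    [NormedSpace ℝ E] {f : E → E} {U : Set E} {x y : ℝ → E} {B : E →L[ℝ] E →L[ℝ] ℝ} {c : ℝ}
    (hc : 0 < c) (hB : ∀ z ∈ U, ∀ w ∈ U,
      c * B (z - w) (z - w) ≤ B (z - w) (f z - f w) + B (f z - f w) (z - w))
    (hU : Bornology.IsBounded U) (hx : IsForwardSolutionIn f U x)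
    (hy : IsForwardSolutionIn f U y) : B (x 0 - y 0) (x 0 - y 0) ≤ 0 := by
  obtain ⟨R, hR0, hR⟩ := (hU.sub hU).exists_pos_norm_le
  refine nonpos_of_mul_le_hasDerivWithinAt_of_bddAbove
    (g := fun t ↦ B (x t - y t) (x t - y t)) hc (fun t ht ↦ ?_)
    (fun t ht ↦ hB _ (hx.mapsTo ht) _ (hy.mapsTo ht)) ⟨‖B‖ * R * R, ?_⟩
  · have hsub := (hx.isIntegralCurveOn t ht).sub (hy.isIntegralCurveOn t ht)
    exact B.hasDerivWithinAt_of_bilinear hsub hsub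
  · rintro _ ⟨t, ht, rfl⟩
    have hnorm : ‖x t - y t‖ ≤ R := hR _ (sub_mem_sub (hx.mapsTo ht) (hy.mapsTo ht))
    exact (Real.le_norm_self _).trans ((B.le_opNorm₂ _ _).trans (by gcongr))

lemma exists_mem_nhds_forall_mul_apply_sub_sub_le {E : Type*} [NormedAddCommGroup E]
    [NormedSpace ℝ E] {f : E → E} {p : E} {A : E →L[ℝ] E} (hf : HasStrictFDerivAt f A p)
    {B : E →L[ℝ] E →L[ℝ] ℝ} {c : ℝ}
    (hB : ∀ w, B (A w) w + B w (A w) = c * B w w + ‖w‖ ^ 2) :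
    ∃ U ∈ 𝓝 p, ∀ z ∈ U, ∀ w ∈ U,
      c * B (z - w) (z - w) ≤ B (z - w) (f z - f w) + B (f z - f w) (z - w) := by
  obtain ⟨η, hη, hBη⟩ : ∃ η : ℝ≥0, 0 < η ∧ 2 * ‖B‖ * η ≤ 1 := by
    obtain ⟨η, hη, hBη⟩ := exists_pos_mul_lt one_pos (2 * ‖B‖)
    exact ⟨⟨η, hη.le⟩, hη, hBη.le⟩
  obtain ⟨U, hU, hfU⟩ := hf.approximates_deriv_on_nhds (.inr hη)
  exact ⟨U, hU, fun z hz w hw ↦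
    mul_le_apply_add_apply_of_norm_sub_le hBη (hB _) (hfU z hz w hw)⟩

section Separation

variable {E : Type*} [NormedAddCommGroup E] [InnerProductSpace ℝ E] [FiniteDimensional ℝ E]

lemma finrank_orthogonal_span_pair_add_two {g v : E} (hg : g ≠ 0) (hv : v ≠ 0)
    (hgv : ⟪g, v⟫ = 0) : finrank ℝ (Submodule.span ℝ {g, v})ᗮ + 2 = finrank ℝ E := by
  have hindep : LinearIndependent ℝ ![g, v] :=
    linearIndependent_of_ne_zero_of_inner_eq_zero (𝕜 := ℝ)
      (fun i ↦ by fin_cases i <;> simpa)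
      (fun i j hij ↦ by fin_cases i <;> fin_cases j <;> simp_all [real_inner_comm])
  have hspan : finrank ℝ (Submodule.span ℝ {g, v}) = 2 := by
    rw [← Matrix.range_cons_cons_empty g v ![], finrank_span_eq_card hindep, Fintype.card_fin]
  rw [add_comm, ← hspan, Submodule.finrank_add_finrank_orthogonal]

lemma exists_shifted_lyapunov_form (A : E →L[ℝ] E) {v : E} {lam : ℝ} (hv : v ≠ 0)
    (hlam : 0 < lam) (hAv : A v = lam • v) :
    ∃ c > 0, ∃ B : E →L[ℝ] E →L[ℝ] ℝ,
      (∀ w, B (A w) w + B w (A w) = c * B w w + ‖w‖ ^ 2) ∧ 0 < B v v := by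
  obtain ⟨c, ⟨hc, hclam⟩, B, hB⟩ := exists_shifted_lyapunov_equation A (innerSL ℝ)
    (Ioo_infinite (show 0 < 2 * lam by positivity))
  have hBw : ∀ w, B (A w) w + B w (A w) = c * B w w + ‖w‖ ^ 2 := fun w ↦ by
    rw [hB, innerSL_apply_apply, real_inner_self_eq_norm_sq]
  refine ⟨c, hc, B, hBw, ?_⟩
  have hBv : (2 * lam - c) * B v v = ‖v‖ ^ 2 := by
    have := hBw v
    simp only [hAv, map_smul, smul_apply, smul_eq_mul] at this
    linarith
  exact pos_of_mul_pos_right (hBv ▸ by positivity) (sub_nonneg.2 hclam.le)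

lemma apply_self_pos_of_orthogonalProjectionOnto_eq_zero {B : E →L[ℝ] E →L[ℝ] ℝ} {g v : E}
    (hg : g ≠ 0) (hgv : ⟪g, v⟫ = 0) (hBv : 0 < B v v) {w : E} (hw : w ≠ 0)
    (hproj : (Submodule.span ℝ {g, v})ᗮ.orthogonalProjectionOnto w = 0) (hgw : ⟪g, w⟫ = 0) :
    0 < B w w := by
  rw [Submodule.orthogonalProjectionOnto_eq_zero_iff, Submodule.orthogonal_orthogonal,
    Submodule.mem_span_pair] at hproj
  obtain ⟨a, b, rfl⟩ := hproj
  obtain rfl : a = 0 := by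
    simpa [inner_add_right, inner_smul_right, hgv, hg] using hgw
  have hb : b ≠ 0 := fun hb ↦ hw (by simp [hb])
  simp only [zero_smul, zero_add, map_smul, smul_apply, smul_eq_mul, ← mul_assoc]
  exact mul_pos (mul_self_pos.2 hb) hBv

lemma exists_pos_mul_norm_le_norm_orthogonalProjectionOnto (B : E →L[ℝ] E →L[ℝ] ℝ) {g v : E}
    (hg : g ≠ 0) (hgv : ⟪g, v⟫ = 0) (hBv : 0 < B v v) :
    ∃ m > 0, ∀ w, B w w ≤ 0 → |⟪g, w⟫| ≤ m * ‖w‖ →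
      m * ‖w‖ ≤ ‖(Submodule.span ℝ {g, v})ᗮ.orthogonalProjectionOnto w‖ := by
  obtain ⟨m, hm, hmT⟩ := exists_pos_mul_norm_le_norm_apply_of_apply_self_nonpos B
    ((Submodule.span ℝ {g, v})ᗮ.orthogonalProjectionOnto.prod (innerSL ℝ g)) fun w hTw hw ↦
      apply_self_pos_of_orthogonalProjectionOnto_eq_zero hg hgv hBv hw (congrArg Prod.fst hTw)
        (congrArg Prod.snd hTw)
  refine ⟨m / 2, half_pos hm, fun w hBw hgw ↦ ?_⟩
  have hmw : 0 ≤ m * ‖w‖ := by positivity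
  rcases le_max_iff.1 (hmT w hBw) with hproj | hinner
  · exact (by linarith : m / 2 * ‖w‖ ≤ m * ‖w‖).trans hproj
  · have hle : m * ‖w‖ ≤ m / 2 * ‖w‖ := hinner.trans hgw
    exact (by linarith : m / 2 * ‖w‖ ≤ 0).trans (norm_nonneg _)

lemma exists_mem_nhds_dist_le_mul_dist_orthogonalProjectionOnto {f : E → E} {h : E → ℝ}
    {p v : E} {lam : ℝ} (hf : ContDiffAt ℝ 1 f p) (hh : ContDiffAt ℝ 1 h p)
    (hgrad : gradient h p ≠ 0) (hv : v ≠ 0) (hgv : ⟪gradient h p, v⟫ = 0) (hlam : 0 < lam)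
    (hfv : fderiv ℝ f p v = lam • v) :
    ∃ U ∈ 𝓝 p, ∃ K : ℝ≥0, ∀ x y, IsForwardSolutionIn f (U ∩ {z | h z = 0}) x →
      IsForwardSolutionIn f (U ∩ {z | h z = 0}) y →
      dist (x 0) (y 0) ≤ K * dist
        ((Submodule.span ℝ {gradient h p, v})ᗮ.orthogonalProjectionOnto (x 0))
        ((Submodule.span ℝ {gradient h p, v})ᗮ.orthogonalProjectionOnto (y 0)) := by
  obtain ⟨c, hc, B, hB, hBv⟩ := exists_shifted_lyapunov_form (fderiv ℝ f p) hv hlam hfv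
  obtain ⟨m, hm, hmB⟩ := exists_pos_mul_norm_le_norm_orthogonalProjectionOnto B hgrad hgv hBv
  obtain ⟨U₁, hU₁, hBU₁⟩ := exists_mem_nhds_forall_mul_apply_sub_sub_le
    (hf.hasStrictFDerivAt one_ne_zero) hB
  obtain ⟨U₂, hU₂, hhU₂⟩ := (hh.hasStrictFDerivAt one_ne_zero).approximates_deriv_on_nhds
    (c := ⟨m, hm.le⟩) (.inr hm)
  refine ⟨U₁ ∩ U₂ ∩ Metric.ball p 1,
    inter_mem (inter_mem hU₁ hU₂) (Metric.ball_mem_nhds p one_pos), ⟨m⁻¹, by positivity⟩,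
    fun x y hx hy ↦ ?_⟩
  obtain ⟨⟨⟨-, hxU₂⟩, -⟩, hhx⟩ := hx.mapsTo self_mem_Ici
  obtain ⟨⟨⟨-, hyU₂⟩, -⟩, hhy⟩ := hy.mapsTo self_mem_Ici
  have hnonpos : B (x 0 - y 0) (x 0 - y 0) ≤ 0 :=
    IsForwardSolutionIn.apply_sub_sub_nonpos hc
      (fun z hz w hw ↦ hBU₁ z hz.1.1.1 w hw.1.1.1)
      (Metric.isBounded_ball.subset fun z hz ↦ hz.1.2) hx hy
  have htangent : |⟪gradient h p, x 0 - y 0⟫| ≤ m * ‖x 0 - y 0‖ := by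
    have happrox := hhU₂ _ hxU₂ _ hyU₂
    rwa [show h (x 0) = 0 from hhx, show h (y 0) = 0 from hhy, sub_zero, zero_sub, norm_neg,
      Real.norm_eq_abs, ← inner_gradient_left] at happrox
  rw [dist_eq_norm, dist_eq_norm, ← map_sub]
  exact (le_inv_mul_iff₀ hm).2 (hmB _ hnonpos htangent)

end Separation

section NullSets

lemma hausdorffMeasure_image_eq_zero_of_dist_le_mul_dist {ι X F : Type*} [MetricSpace X]
    [MeasurableSpace X] [BorelSpace X] [NormedAddCommGroup F] [NormedSpace ℝ F]
    [FiniteDimensional ℝ F] {C : Set ι} {a : ι → X} {φ : ι → F} {K : ℝ≥0}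
    (haφ : ∀ i ∈ C, ∀ j ∈ C, dist (a i) (a j) ≤ K * dist (φ i) (φ j)) {d : ℝ}
    (hd : finrank ℝ F < d) : μH[d] (a '' C) = 0 := by
  rcases C.eq_empty_or_nonempty with rfl | ⟨i₀, -⟩
  · simp
  have : Nonempty ι := ⟨i₀⟩
  borelize F
  set ψ := Function.invFunOn φ C
  have hψ : ∀ i ∈ C, ψ (φ i) ∈ C ∧ φ (ψ (φ i)) = φ i := fun i hi ↦
    Function.invFunOn_pos ⟨i, hi, rfl⟩
  have hfactor : a '' C = (a ∘ ψ) '' (φ '' C) := by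
    rw [image_image]
    refine image_congr fun i hi ↦ dist_le_zero.1 ?_
    simpa [(hψ i hi).2] using haφ i hi _ (hψ i hi).1
  have hlip : LipschitzOnWith K (a ∘ ψ) (φ '' C) := by
    refine LipschitzOnWith.of_dist_le_mul ?_
    rintro _ ⟨i, hi, rfl⟩ _ ⟨j, hj, rfl⟩
    simpa [(hψ i hi).2, (hψ j hj).2] using haφ _ (hψ i hi).1 _ (hψ j hj).1
  have hd0 : 0 ≤ d := (Nat.cast_nonneg _).trans hd.le
  rw [hfactor, ← nonpos_iff_eq_zero]
  calc μH[d] ((a ∘ ψ) '' (φ '' C)) ≤ (K : ENNReal) ^ d * μH[d] (φ '' C) :=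
        hlip.hausdorffMeasure_image_le hd0
    _ = 0 := by simp [Real.hausdorffMeasure_of_finrank_lt hd]

variable {E : Type*} [NormedAddCommGroup E] [InnerProductSpace ℝ E] [FiniteDimensional ℝ E]
  [MeasurableSpace E] [BorelSpace E] {f : E → E} {h : E → ℝ}

theorem hausdorffMeasure_setOf_tendsto_unstable_eq_zero {p v : E} {lam : ℝ}
    (hf : ContDiff ℝ 1 f) (hh : ContDiffAt ℝ 1 h p) (hgrad : gradient h p ≠ 0) (hv : v ≠ 0)
    (hgv : ⟪gradient h p, v⟫ = 0) (hlam : 0 < lam) (hfv : fderiv ℝ f p v = lam • v) {d : ℝ}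
    (hd : finrank ℝ E < d + 2) :
    μH[d] {x₀ | ∃ x, IsForwardSolutionIn f {z | h z = 0} x ∧ x 0 = x₀ ∧
      Tendsto x atTop (𝓝 p)} = 0 := by
  obtain ⟨U, hU, K, hUK⟩ := exists_mem_nhds_dist_le_mul_dist_orthogonalProjectionOnto
    hf.contDiffAt hh hgrad hv hgv hlam hfv
  let C : ℕ × ℕ → Set (ℝ → E) := fun q ↦
    {x | IsForwardSolutionIn f (Metric.closedBall 0 q.1) x ∧
      IsForwardSolutionIn f (U ∩ {z | h z = 0}) fun t ↦ x (q.2 + t)}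
  have hcover : {x₀ | ∃ x, IsForwardSolutionIn f {z | h z = 0} x ∧ x 0 = x₀ ∧
      Tendsto x atTop (𝓝 p)} ⊆ ⋃ q, (fun x ↦ x 0) '' C q := by
    rintro _ ⟨x, hx, rfl, hlim⟩
    obtain ⟨R, hR⟩ := (isBounded_image_Ici_of_tendsto hx.continuousOn hlim).exists_norm_le
    obtain ⟨N, hRN⟩ := exists_nat_ge R
    obtain ⟨T, hT⟩ := (tendsto_natCast_atTop_atTop.eventually
      (eventually_forall_ge_atTop.2 (hlim.eventually_mem hU))).exists
    refine mem_iUnion.2 ⟨(N, T), x, ⟨⟨hx.isIntegralCurveOn, fun t ht ↦ ?_⟩, ?_⟩, rfl⟩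
    · exact mem_closedBall_zero_iff.2 ((hR _ (mem_image_of_mem x ht)).trans hRN)
    · exact hx.comp_const_add T.cast_nonneg fun t ht ↦
        ⟨hT t ht, hx.mapsTo (mem_Ici.2 (T.cast_nonneg.trans ht))⟩
  refine measure_mono_null hcover (measure_iUnion_null fun q ↦ ?_)
  obtain ⟨L, hL⟩ := hf.contDiffOn.exists_lipschitzOnWith one_ne_zero
    (convex_closedBall (0 : E) q.1) (isCompact_closedBall 0 _)
  refine hausdorffMeasure_image_eq_zero_of_dist_le_mul_dist
    (φ := fun x ↦ (Submodule.span ℝ {gradient h p, v})ᗮ.orthogonalProjectionOnto (x q.2))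
    (K := K * (L * q.2 : ℝ).exp.toNNReal) (fun x hx y hy ↦ ?_) ?_
  · have hback := hx.1.dist_le_mul_exp hy.1 hL q.2.cast_nonneg
    have hsep := hUK _ _ hx.2 hy.2
    rw [add_zero] at hsep
    rw [NNReal.coe_mul, Real.coe_toNNReal _ (Real.exp_pos _).le, mul_right_comm]
    exact hback.trans (by gcongr)
  · rw [← finrank_orthogonal_span_pair_add_two hgrad hv hgv] at hd
    push_cast at hd
    linarith

end NullSets

lemma isBounded_setOf_le_of_forall_exists_lt {X : Type*} [SeminormedAddCommGroup X] {S : Set X}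
    {V : X → ℝ} (hV : ∀ M > 0, ∃ R > 0, ∀ z ∈ S, R < ‖z‖ → M < V z) (M : ℝ) :
    Bornology.IsBounded {z ∈ S | V z ≤ M} := by
  obtain ⟨R, -, hR⟩ := hV (max M 1) (by positivity)
  refine isBounded_iff_forall_norm_le.2 ⟨R, fun z hz ↦ ?_⟩
  by_contra! hRz
  exact (hR z hz.1 hRz).not_ge (hz.2.trans (le_max_left M 1))

lemma neg_mul_prod_norm_sub_sq_neg {ι X : Type*} [Fintype ι] [NormedAddCommGroup X] {ε : ℝ}
    (hε : 0 < ε) {y : ι → X} {z : X} (hz : z ∉ range y) : -ε * ∏ i, ‖z - y i‖ ^ 2 < 0 :=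
  mul_neg_of_neg_of_pos (neg_neg_of_pos hε) <| Finset.prod_pos fun i _ ↦
    pow_pos (norm_pos_iff.2 (sub_ne_zero.2 fun hzi ↦ hz ⟨i, hzi.symm⟩)) 2

lemma IsGlobalSolutionOn.isForwardSolutionIn {n : ℕ}
    {f : EuclideanSpace ℝ (Fin n) → EuclideanSpace ℝ (Fin n)}
    {h : EuclideanSpace ℝ (Fin n) → ℝ} {x : ℝ → EuclideanSpace ℝ (Fin n)}
    (hx : IsGlobalSolutionOn f h x) : IsForwardSolutionIn f {z | h z = 0} x :=
  ⟨fun t ht ↦ (hx t ht).1, fun t ht ↦ (hx t ht).2⟩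

theorem stmt_1_general {E : Type*} [NormedAddCommGroup E] [InnerProductSpace ℝ E]
    [FiniteDimensional ℝ E] [MeasurableSpace E] [BorelSpace E] {f : E → E} {h V : E → ℝ}
    (hf : ContDiff ℝ 1 f) (hh : ContDiff ℝ 1 h) (hV : ContDiff ℝ 1 V)
    (hfin : {z | h z = 0 ∧ f z = 0}.Finite)
    (hunstable : ∀ p, h p = 0 → f p = 0 → p ≠ 0 → gradient h p ≠ 0 ∧
      ∃ v ≠ 0, ⟪gradient h p, v⟫ = 0 ∧ ∃ lam : ℝ, 0 < lam ∧ fderiv ℝ f p v = lam • v)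
    (hVmin : ∀ z, h z = 0 → z ≠ 0 → V 0 < V z)
    (hVbdd : ∀ M, Bornology.IsBounded {z | h z = 0 ∧ V z ≤ M})
    (hVf : ∀ z, h z = 0 → f z ≠ 0 → ⟪gradient V z, f z⟫ < 0) :
    (∀ r > 0, ∃ δ > 0, ∀ x, IsForwardSolutionIn f {z | h z = 0} x → ‖x 0‖ < δ →
      ∀ t ≥ 0, ‖x t‖ < r) ∧
    ∀ d : ℝ, finrank ℝ E < d + 2 →
      μH[d] {x₀ | ∃ x, IsForwardSolutionIn f {z | h z = 0} x ∧ x 0 = x₀ ∧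
        ¬ Tendsto x atTop (𝓝 0)} = 0 := by
  have hclosed : IsClosed {z | h z = 0} := isClosed_eq hh.continuous continuous_const
  have hdecrease : ∀ z ∈ {z | h z = 0}, f z ≠ 0 → fderiv ℝ V z (f z) < 0 := fun z hz hfz ↦ by
    simpa only [inner_gradient_left] using hVf z hz hfz
  refine ⟨fun r hr ↦ ?_, fun d hd ↦ ?_⟩
  · obtain ⟨δ, hδ, hstable⟩ :=
      exists_pos_forall_dist_lt_of_comp_le hclosed hV.continuous hVmin hr
    simp only [dist_zero_right] at hstable
    refine ⟨δ, hδ, fun x hx ↦ hstable x hx.continuousOn hx.mapsTo fun t ht ↦ ?_⟩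
    exact hx.antitoneOn_comp (hV.differentiable one_ne_zero)
      (fun z hz ↦ map_nonpos_of_ne_zero_imp_neg (hdecrease z hz)) self_mem_Ici ht ht
  · have hnull : ∀ p ∈ {z | h z = 0 ∧ f z = 0} \ {0}, μH[d] {x₀ | ∃ x,
        IsForwardSolutionIn f {z | h z = 0} x ∧ x 0 = x₀ ∧ Tendsto x atTop (𝓝 p)} = 0 := by
      rintro p ⟨⟨hhp, hfp⟩, hp0⟩
      obtain ⟨hgrad, v, hv, hgv, lam, hlam, hfv⟩ := hunstable p hhp hfp hp0
      exact hausdorffMeasure_setOf_tendsto_unstable_eq_zero hf hh.contDiffAt hgrad hv hgv hlam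
        hfv hd
    refine measure_mono_null ?_ ((measure_biUnion_null_iff hfin.sdiff.countable).2 hnull)
    rintro _ ⟨x, hx, rfl, hx0⟩
    obtain ⟨p, hhp, hfp, hlim⟩ := hx.exists_tendsto_equilibrium_of_isBounded_sublevel hclosed
      hf.continuous hV hdecrease hfin hVbdd
    exact mem_biUnion (x := p) ⟨⟨hhp, hfp⟩, fun hp0 ↦ hx0 (hp0 ▸ hlim)⟩ ⟨x, hx, rfl, hlim⟩

theorem stmt_1 (n k : ℕ) (hk : 0 < k)
    (f : EuclideanSpace ℝ (Fin n) → EuclideanSpace ℝ (Fin n)) (hf : ContDiff ℝ 1 f)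
    (h : EuclideanSpace ℝ (Fin n) → ℝ) (hh : ContDiff ℝ 1 h)
    (h0 : h 0 = 0)
    (hgrad_ne : ∀ x, h x = 0 → gradient h x ≠ 0)
    (xs : Fin k → EuclideanSpace ℝ (Fin n))
    (hxs0 : xs ⟨0, hk⟩ = 0)
    (hxsH : ∀ i, h (xs i) = 0)
    (hxs_distinct : Function.Injective xs)
    (hxs_eq : {x | h x = 0 ∧ f x = 0} = Set.range xs)
    -- (a) each other equilibrium has an unstable eigendirection tangent to `H`
    (hunstable : ∀ j : Fin k, j ≠ ⟨0, hk⟩ →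
      ∃ v : EuclideanSpace ℝ (Fin n), v ≠ 0 ∧ ⟪gradient h (xs j), v⟫ = 0 ∧
        ∃ lam : ℝ, 0 < lam ∧ fderiv ℝ f (xs j) v = lam • v)
    -- (b) Lyapunov function
    (V : EuclideanSpace ℝ (Fin n) → ℝ) (hV : ContDiff ℝ 1 V)
    (hV0 : V 0 = 0)
    (hVpos : ∀ x, h x = 0 → x ≠ 0 → 0 < V x)
    (hVrad : ∀ M > 0, ∃ R > 0, ∀ x, h x = 0 → R < ‖x‖ → M < V x)
    (ε : ℝ) (hε : 0 < ε)
    (hVdot : ∀ x, h x = 0 →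
      ⟪gradient V x, f x⟫ ≤ -ε * ∏ i : Fin k, ‖x - xs i‖ ^ 2) :
    -- Lyapunov stability of 0 for solutions on H
    (∀ r > 0, ∃ δ > 0, ∀ x : ℝ → EuclideanSpace ℝ (Fin n),
        IsGlobalSolutionOn f h x → ‖x 0‖ < δ → ∀ t ≥ (0 : ℝ), ‖x t‖ < r) ∧
    -- the set of initial conditions on H not converging to 0 is Hausdorff-null
    MeasureTheory.Measure.hausdorffMeasure ((n : ℝ) - 1)
      {x₀ : EuclideanSpace ℝ (Fin n) | h x₀ = 0 ∧
        ∃ x : ℝ → EuclideanSpace ℝ (Fin n), IsGlobalSolutionOn f h x ∧ x 0 = x₀ ∧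
          ¬ Filter.Tendsto x Filter.atTop (nhds 0)} = 0 := by
  have hsaddle : ∀ p, h p = 0 → f p = 0 → p ≠ 0 → gradient h p ≠ 0 ∧ ∃ v ≠ 0,
      ⟪gradient h p, v⟫ = 0 ∧ ∃ lam : ℝ, 0 < lam ∧ fderiv ℝ f p v = lam • v := by
    intro p hhp hfp hp0
    obtain ⟨j, rfl⟩ := hxs_eq.subset ⟨hhp, hfp⟩
    exact ⟨hgrad_ne _ hhp, hunstable j fun hj ↦ hp0 (hj ▸ hxs0)⟩
  have hdecrease : ∀ z, h z = 0 → f z ≠ 0 → ⟪gradient V z, f z⟫ < 0 := fun z hhz hfz ↦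
    (hVdot z hhz).trans_lt (neg_mul_prod_norm_sub_sq_neg hε fun hz ↦ hfz (hxs_eq.superset hz).2)
  obtain ⟨hstable, hnull⟩ := stmt_1_general hf hh hV (hxs_eq ▸ finite_range xs) hsaddle
    (hV0 ▸ hVpos) (isBounded_setOf_le_of_forall_exists_lt hVrad) hdecrease
  have hdim : (finrank ℝ (EuclideanSpace ℝ (Fin n)) : ℝ) < n - 1 + 2 := by
    rw [finrank_euclideanSpace_fin]
    linarith
  refine ⟨fun r hr ↦ ?_, measure_mono_null ?_ (hnull _ hdim)⟩
  · obtain ⟨δ, hδ, hx⟩ := hstable r hr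
    exact ⟨δ, hδ, fun x hsol ↦ hx x hsol.isForwardSolutionIn⟩
  · rintro x₀ ⟨-, x, hsol, hx₀⟩
    exact ⟨x, hsol.isForwardSolutionIn, hx₀⟩
end

section
/- Let f : ℝⁿ → ℝⁿ be continuously differentiable, h : ℝⁿ → ℝ continuously differentiable with ∇h(x) ≠ 0 for all x ∈ H, and H = {x ∈ ℝⁿ : h(x) = 0}. Let x₂*, …, x_k* ∈ H satisfy f(x_j*) = 0, and assume for each j = 2, …, k there exist v ∈ ℝⁿ with v ≠ 0 and ⟨∇h(x_j*), v⟩ = 0, and λ > 0, such that Df(x_j*) v = λ v. Then the set {x₀ ∈ H : there exist j ∈ {2, …, k} and a global solution on H with x(0) = x₀ and x(t) → x_j* as t → ∞} has (n−1)-dimensional Hausdorff measure zero. -/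
open scoped RealInnerProductSpace

/-!
At an equilibrium `a` with `A = Df(a)` and `A v = λ v`, `λ > 0`, solve the Lyapunov equation
`A†X + XA = μX + 1` with `0 < μ < 2λ`; this is possible for all but finitely many `μ`. Then
`q(w) = ⟪w, X w⟫` is positive at `v`, while along the difference `w` of two solutions staying near
`a` we have `q' ≥ μ q`. Boundedness of `w` forces `q(w) ≤ 0`, so differences of such solutions avoid
a neighbourhood of the direction `v`. As they are also nearly tangent to `ker Dh(a)`, the
orthogonal projection onto `ker Dh(a) ∩ v⊥` is antilipschitz on the set of their initial points,
which therefore has dimension at most `dim ker Dh(a) - 1`. A solution converging to `a` eventually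
stays near `a`, and backward Grönwall carries the dimension bound back to time `0`.
-/

open Set Filter Topology Module MeasureTheory Metric
open scoped NNReal ENNReal

section General

theorem dimH_le_of_antilipschitzWith_domRestrict {X Y : Type*} [EMetricSpace X] [EMetricSpace Y]
    {s : Set X} {t : Set Y} {φ : X → Y} {C : ℝ≥0} (hφ : AntilipschitzWith C (s.domRestrict φ))
    (hst : MapsTo φ s t) : dimH s ≤ dimH t :=
  calc dimH s = dimH (Subtype.val '' (univ : Set s)) := by rw [image_univ, Subtype.range_coe]
    _ = dimH (univ : Set s) := isometry_subtype_coe.dimH_image univ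
    _ ≤ dimH (s.domRestrict φ '' univ) := hφ.le_dimH_image univ
    _ ≤ dimH t := dimH_mono (image_subset_iff.2 fun x _ => hst x.2)

theorem nonpos_of_mul_le_deriv_of_bddAbove {q q' : ℝ → ℝ} {a μ : ℝ} (hμ : 0 < μ)
    (hq : ∀ t, a ≤ t → HasDerivWithinAt q (q' t) (Ici a) t)
    (hq' : ∀ t, a ≤ t → μ * q t ≤ q' t) (hbdd : BddAbove (q '' Ici a)) : q a ≤ 0 := by
  obtain ⟨M, hM⟩ := hbdd
  have hderiv (t : ℝ) (ht : a ≤ t) : HasDerivWithinAt (fun t => Real.exp (-μ * t) * q t)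
      (Real.exp (-μ * t) * (q' t - μ * q t)) (Ici a) t := by
    have hexp : HasDerivAt (fun t => Real.exp (-μ * t)) (Real.exp (-μ * t) * (-μ)) t := by
      simpa using ((hasDerivAt_id t).const_mul (-μ)).exp
    exact (hexp.hasDerivWithinAt.mul (hq t ht)).congr_deriv (by ring)
  have hmono : MonotoneOn (fun t => Real.exp (-μ * t) * q t) (Ici a) :=
    monotoneOn_of_hasDerivWithinAt_nonneg (convex_Ici a)
      (fun t ht => (hderiv t ht).continuousWithinAt)
      (fun t ht => (hderiv t (interior_subset ht)).mono interior_subset)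
      fun t ht => mul_nonneg (Real.exp_pos _).le (sub_nonneg.2 (hq' t (interior_subset ht)))
  have hlim : Tendsto (fun t => Real.exp (-μ * t) * M) atTop (𝓝 0) := by
    simpa using (Real.tendsto_exp_atBot.comp
      (tendsto_id.const_mul_atTop_of_neg (neg_lt_zero.2 hμ))).mul_const M
  have hle : Real.exp (-μ * a) * q a ≤ 0 := by
    refine ge_of_tendsto hlim ?_
    filter_upwards [eventually_ge_atTop a] with t ht
    exact (hmono self_mem_Ici ht ht).trans
      (mul_le_mul_of_nonneg_left (hM (mem_image_of_mem q ht)) (Real.exp_pos _).le)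
  exact nonpos_of_mul_nonpos_right hle (Real.exp_pos _)

theorem dist_left_le_of_trajectories_ODE_of_mem {E : Type*} [NormedAddCommGroup E]
    [NormedSpace ℝ E] {v : ℝ → E → E} {s : ℝ → Set E} {K : ℝ≥0} {x y : ℝ → E} {a b : ℝ}
    (hab : a ≤ b) (hv : ∀ t ∈ Ioc a b, LipschitzOnWith K (v t) (s t))
    (hx : ContinuousOn x (Icc a b))
    (hx' : ∀ t ∈ Ioc a b, HasDerivWithinAt x (v t (x t)) (Iic t) t)
    (hxs : ∀ t ∈ Ioc a b, x t ∈ s t)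
    (hy : ContinuousOn y (Icc a b))
    (hy' : ∀ t ∈ Ioc a b, HasDerivWithinAt y (v t (y t)) (Iic t) t)
    (hys : ∀ t ∈ Ioc a b, y t ∈ s t) :
    dist (x a) (y a) ≤ dist (x b) (y b) * Real.exp (K * (b - a)) := by
  have hIoc {t : ℝ} (ht : t ∈ Ico (-b) (-a)) : -t ∈ Ioc a b :=
    ⟨lt_neg.2 ht.2, neg_le.2 ht.1⟩
  have hneg {t : ℝ} : MapsTo Neg.neg (Ici t) (Iic (-t)) :=
    fun _ hr => neg_le_neg (mem_Ici.1 hr)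
  have hcont {z : ℝ → E} (hz : ContinuousOn z (Icc a b)) :
      ContinuousOn (fun t => z (-t)) (Icc (-b) (-a)) :=
    hz.comp continuousOn_neg fun t ht => ⟨le_neg.2 ht.2, neg_le.2 ht.1⟩
  have hderiv {z : ℝ → E} (hz : ∀ t ∈ Ioc a b, HasDerivWithinAt z (v t (z t)) (Iic t) t) :
      ∀ t ∈ Ico (-b) (-a), HasDerivWithinAt (fun t => z (-t)) (-v (-t) (z (-t))) (Ici t) t :=
    fun t ht => by
      simpa [Function.comp_def] using (hz (-t) (hIoc ht)).scomp t
        (hasDerivAt_neg t).hasDerivWithinAt hneg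
  simpa [neg_add_eq_sub] using dist_le_of_trajectories_ODE_of_mem
    (v := fun t z => -v (-t) z) (fun t ht => (hv (-t) (hIoc ht)).neg)
    (hcont hx) (hderiv hx') (fun t ht => hxs (-t) (hIoc ht))
    (hcont hy) (hderiv hy') (fun t ht => hys (-t) (hIoc ht))
    le_rfl (-a) (right_mem_Icc.2 (neg_le_neg hab))

theorem exists_pos_forall_mul_norm_le_norm_map {E F : Type*} [NormedAddCommGroup E]
    [NormedSpace ℝ E] [ProperSpace E] [NormedAddCommGroup F] [NormedSpace ℝ F] {s : Set E}
    (hs : IsClosed s) (hsmul : ∀ c : ℝ, 0 < c → ∀ w ∈ s, c • w ∈ s) (L : E →L[ℝ] F)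
    (hL : ∀ w ∈ s, L w = 0 → w = 0) : ∃ m > 0, ∀ w ∈ s, m * ‖w‖ ≤ ‖L w‖ := by
  obtain ⟨m, hm, hmle⟩ : ∃ m > 0, ∀ w ∈ sphere 0 1 ∩ s, m ≤ ‖L w‖ := by
    refine ((isCompact_sphere 0 1).inter_right hs).exists_forall_le' (by fun_prop) fun w hw => ?_
    exact norm_pos_iff.2 fun hLw =>
      ne_zero_of_mem_unit_sphere ⟨w, hw.1⟩ (hL w hw.2 hLw)
  refine ⟨m, hm, fun w hw => ?_⟩
  rcases eq_or_ne w 0 with rfl | hw0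
  · simp
  have hw_pos : 0 < ‖w‖ := norm_pos_iff.2 hw0
  have hunit := hmle (‖w‖⁻¹ • w)
    ⟨by simp [norm_smul, hw_pos.ne'], hsmul _ (inv_pos.2 hw_pos) w hw⟩
  rwa [map_smul, norm_smul, norm_inv, norm_norm, inv_mul_eq_div, le_div_iff₀ hw_pos] at hunit

theorem mem_of_orthogonalProjectionOnto_orthogonal_inf_eq_zero {𝕜 E : Type*} [RCLike 𝕜]
    [NormedAddCommGroup E] [InnerProductSpace 𝕜 E] {K L : Submodule 𝕜 E}
    [K.HasOrthogonalProjection] [(Kᗮ ⊓ L).HasOrthogonalProjection] (hKL : K ≤ L) {w : E}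
    (hw : w ∈ L) (hproj : (Kᗮ ⊓ L).orthogonalProjectionOnto w = 0) : w ∈ K := by
  rw [← Submodule.sup_orthogonal_inf_of_hasOrthogonalProjection hKL] at hw
  obtain ⟨y, hy, z, hz, rfl⟩ := Submodule.mem_sup.1 hw
  have hyproj : (Kᗮ ⊓ L).orthogonalProjectionOnto y = 0 :=
    Submodule.orthogonalProjectionOnto_apply_of_mem_orthogonal
      fun u hu => Submodule.inner_left_of_mem_orthogonal hy hu.1
  have hz0 : z = 0 := by
    have hzproj := Submodule.orthogonalProjectionOnto_mem_subspace_eq_self ⟨z, hz⟩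
    rw [map_add, hyproj, zero_add, hzproj] at hproj
    exact congrArg Subtype.val hproj
  rwa [hz0, add_zero]

theorem finrank_orthogonal_span_singleton_inf_add_one {𝕜 E : Type*} [RCLike 𝕜]
    [NormedAddCommGroup E] [InnerProductSpace 𝕜 E] {K : Submodule 𝕜 E} [FiniteDimensional 𝕜 K]
    {v : E} (hv : v ≠ 0) (hvK : v ∈ K) :
    finrank 𝕜 ((𝕜 ∙ v)ᗮ ⊓ K : Submodule 𝕜 E) + 1 = finrank 𝕜 K := by
  rw [← Submodule.finrank_add_inf_finrank_orthogonal
    ((Submodule.span_singleton_le_iff_mem v K).2 hvK), finrank_span_singleton hv, add_comm]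

theorem finrank_ker_fderiv_add_one_of_gradient_ne_zero {𝕜 E : Type*} [RCLike 𝕜]
    [NormedAddCommGroup E] [InnerProductSpace 𝕜 E] [FiniteDimensional 𝕜 E] [CompleteSpace E]
    {h : E → 𝕜} {a : E} (hgrad : gradient h a ≠ 0) :
    finrank 𝕜 (fderiv 𝕜 h a).ker + 1 = finrank 𝕜 E := by
  refine Module.Dual.finrank_ker_add_one_of_ne_zero (f := (fderiv 𝕜 h a : E →ₗ[𝕜] 𝕜)) fun h0 => ?_
  have hfderiv : fderiv 𝕜 h a = 0 := ContinuousLinearMap.coe_injective h0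
  exact hgrad (by rw [gradient, hfderiv, map_zero])

end General

section Lyapunov

variable {E : Type*} [NormedAddCommGroup E] [InnerProductSpace ℝ E] {A X : E →L[ℝ] E} {μ : ℝ}

/-- `X` solves the shifted Lyapunov equation `A†X + XA = μX + 1`, written as an identity of
quadratic forms. No symmetry or sign of `X` is required. -/
def IsLyapunovOperator (A X : E →L[ℝ] E) (μ : ℝ) : Prop :=
  ∀ w, ⟪A w, X w⟫ + ⟪w, X (A w)⟫ = μ * ⟪w, X w⟫ + ‖w‖ ^ 2

theorem exists_isLyapunovOperator [FiniteDimensional ℝ E] (A : E →L[ℝ] E) {s : Set ℝ}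
    (hs : s.Infinite) : ∃ μ ∈ s, ∃ X, IsLyapunovOperator A X μ := by
  let L : End ℝ (E →L[ℝ] E) :=
    { toFun := fun X => A.adjoint ∘L X + X ∘L A
      map_add' := fun X Y => by ext; simp; abel
      map_smul' := fun c X => by ext; simp }
  obtain ⟨μ, hμs, hμL⟩ := (hs.sdiff L.finite_hasEigenvalue).nonempty
  have hinj : Function.Injective (L - algebraMap ℝ (End ℝ (E →L[ℝ] E)) μ) := by
    rw [← LinearMap.ker_eq_bot]
    by_contra hne
    exact hμL (End.hasEigenvalue_iff.2 (by rwa [End.eigenspace_def]))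
  obtain ⟨X, hX⟩ := LinearMap.injective_iff_surjective.1 hinj (ContinuousLinearMap.id ℝ E)
  refine ⟨μ, hμs, X, fun w => ?_⟩
  have hXw : A.adjoint (X w) + X (A w) - μ • X w = w := by
    simpa [L] using congrArg (fun Y : E →L[ℝ] E => Y w) hX
  have hinner := congrArg (fun z => ⟪w, z⟫) hXw
  simp only [inner_sub_right, inner_add_right, inner_smul_right,
    ContinuousLinearMap.adjoint_inner_right, real_inner_self_eq_norm_sq] at hinner
  linarith

theorem IsLyapunovOperator.inner_pos_of_eigenvector (hX : IsLyapunovOperator A X μ) {v : E}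
    (hv : v ≠ 0) {lam : ℝ} (hAv : A v = lam • v) (hμ : μ < 2 * lam) : 0 < ⟪v, X v⟫ := by
  have hform := hX v
  simp only [hAv, map_smul, inner_smul_left, inner_smul_right, RCLike.conj_to_real] at hform
  have hnorm : 0 < ‖v‖ ^ 2 := by positivity
  have hprod : 0 < (2 * lam - μ) * ⟪v, X v⟫ := by linarith
  exact pos_of_mul_pos_right hprod (by linarith)

theorem IsLyapunovOperator.mul_inner_le (hX : IsLyapunovOperator A X μ) {w u : E} {c : ℝ}
    (hu : ‖u - A w‖ ≤ c * ‖w‖) (hc : 2 * ‖X‖ * c ≤ 1) :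
    μ * ⟪w, X w⟫ ≤ ⟪w, X u⟫ + ⟪u, X w⟫ := by
  obtain ⟨e, rfl⟩ : ∃ e, u = A w + e := ⟨u - A w, by abel⟩
  rw [add_sub_cancel_left] at hu
  have hleft : |⟪w, X e⟫| ≤ ‖X‖ * c * ‖w‖ ^ 2 :=
    calc |⟪w, X e⟫| ≤ ‖w‖ * ‖X e‖ := abs_real_inner_le_norm _ _
      _ ≤ ‖w‖ * (‖X‖ * (c * ‖w‖)) := by gcongr; exact X.le_opNorm_of_le hu
      _ = ‖X‖ * c * ‖w‖ ^ 2 := by ring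
  have hright : |⟪e, X w⟫| ≤ ‖X‖ * c * ‖w‖ ^ 2 :=
    calc |⟪e, X w⟫| ≤ ‖e‖ * ‖X w‖ := abs_real_inner_le_norm _ _
      _ ≤ (c * ‖w‖) * (‖X‖ * ‖w‖) := by gcongr; exacts [(norm_nonneg e).trans hu, X.le_opNorm w]
      _ = ‖X‖ * c * ‖w‖ ^ 2 := by ring
  have herror : 2 * (‖X‖ * c * ‖w‖ ^ 2) ≤ ‖w‖ ^ 2 := by
    nlinarith [mul_le_mul_of_nonneg_right hc (sq_nonneg ‖w‖)]
  rw [map_add, inner_add_left, inner_add_right]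
  linarith [hX w, neg_le_of_abs_le hleft, neg_le_of_abs_le hright]

-- The two conditions on `w` cut out a narrow cone around `ker L ∩ {q ≤ 0}`, where
-- `q(w) = ⟪w, X w⟫`. Within `ker L`, the projection vanishes only on `ℝ v`, where `q > 0`.
theorem exists_norm_le_mul_norm_orthogonalProjectionOnto [FiniteDimensional ℝ E] {F : Type*}
    [NormedAddCommGroup F] [NormedSpace ℝ F] (X : E →L[ℝ] E) (L : E →L[ℝ] F) {v : E}
    (hXv : 0 < ⟪v, X v⟫) (hLv : L v = 0) :
    ∃ C η : ℝ≥0, 0 < η ∧ ∀ w, ⟪w, X w⟫ ≤ 0 → ‖L w‖ ≤ η * ‖w‖ →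
      ‖w‖ ≤ C * ‖((ℝ ∙ v)ᗮ ⊓ L.ker).orthogonalProjectionOnto w‖ := by
  set P := ((ℝ ∙ v)ᗮ ⊓ L.ker).orthogonalProjectionOnto
  have hspan : (ℝ ∙ v) ≤ L.ker := (Submodule.span_singleton_le_iff_mem v _).2 hLv
  have hker (w : E) (hw : ⟪w, X w⟫ ≤ 0) (hLPw : L.prod P w = 0) : w = 0 := by
    obtain ⟨hLw, hPw⟩ := Prod.ext_iff.1 hLPw
    obtain ⟨α, rfl⟩ := Submodule.mem_span_singleton.1
      (mem_of_orthogonalProjectionOnto_orthogonal_inf_eq_zero hspan hLw hPw)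
    simp only [map_smul, inner_smul_left, inner_smul_right, RCLike.conj_to_real] at hw
    have hα : α = 0 := by
      by_contra hα
      nlinarith [mul_pos (mul_self_pos.2 hα) hXv]
    rw [hα, zero_smul]
  have hcone (c : ℝ) (_ : 0 < c) (w : E) (hw : ⟪w, X w⟫ ≤ 0) : ⟪c • w, X (c • w)⟫ ≤ 0 := by
    simp only [map_smul, inner_smul_left, inner_smul_right, RCLike.conj_to_real]
    nlinarith [mul_self_nonneg c]
  have hclosed : IsClosed {w | ⟪w, X w⟫ ≤ 0} := isClosed_le (by fun_prop) continuous_const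
  obtain ⟨m, hm, hmle⟩ := exists_pos_forall_mul_norm_le_norm_map hclosed hcone (L.prod P) hker
  lift m to ℝ≥0 using hm.le
  refine ⟨m⁻¹, m / 2, half_pos hm, fun w hw hLw => ?_⟩
  rw [NNReal.coe_inv, inv_mul_eq_div, le_div_iff₀' hm]
  rcases le_max_iff.1 (hmle w hw) with hle | hle
  · have hw0 : (m : ℝ) * ‖w‖ ≤ 0 := by
      push_cast at hLw
      linarith [hle.trans hLw]
    exact hw0.trans (norm_nonneg _)
  · exact hle

end Lyapunov

section Solutions

variable {E : Type*} [NormedAddCommGroup E] [NormedSpace ℝ E] {f : E → E} {Z N : Set E}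
  {x y : ℝ → E} {a : E} {T : ℝ}

/-- `x` solves `ẋ = f(x)` on `[0, ∞)` and stays in `Z`. Values at negative times are junk. -/
def IsSolutionIn (f : E → E) (Z : Set E) (x : ℝ → E) : Prop :=
  ∀ t : ℝ, 0 ≤ t → HasDerivWithinAt x (f (x t)) (Ici 0) t ∧ x t ∈ Z

/-- The viability kernel of `Z`: the points from which some solution of `ẋ = f(x)` remains in `Z`
forever. For `Z` a neighbourhood of an equilibrium it plays the role of a local center-stable
manifold. -/
def viabilityKernel (f : E → E) (Z : Set E) : Set E :=
  {x₀ | ∃ x, IsSolutionIn f Z x ∧ x 0 = x₀}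

/-- The points from which some solution of `ẋ = f(x)` in `Z` lies in `N` from time `T` on. -/
def entrySet (f : E → E) (Z N : Set E) (T : ℝ) : Set E :=
  {x₀ | ∃ x, IsSolutionIn f Z x ∧ x 0 = x₀ ∧ ∀ t, T ≤ t → x t ∈ N}

/-- The stable set of `a` relative to `Z`: the points from which some solution of `ẋ = f(x)` in `Z`
converges to `a`. -/
def stableSet (f : E → E) (Z : Set E) (a : E) : Set E :=
  {x₀ | ∃ x, IsSolutionIn f Z x ∧ x 0 = x₀ ∧ Tendsto x atTop (𝓝 a)}

namespace IsSolutionIn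

theorem continuousOn (hx : IsSolutionIn f Z x) : ContinuousOn x (Ici 0) :=
  fun t ht => (hx t ht).1.continuousWithinAt

theorem inter (hx : IsSolutionIn f Z x) (hN : ∀ t, 0 ≤ t → x t ∈ N) :
    IsSolutionIn f (Z ∩ N) x :=
  fun t ht => ⟨(hx t ht).1, (hx t ht).2, hN t ht⟩

theorem comp_add_const (hx : IsSolutionIn f Z x) (hT : 0 ≤ T) :
    IsSolutionIn f Z fun t => x (t + T) := fun t ht => by
  have hshift : MapsTo (· + T) (Ici 0) (Ici 0) := fun _ hr => add_nonneg hr hT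
  obtain ⟨hderiv, hmem⟩ := hx (t + T) (hshift ht)
  refine ⟨?_, hmem⟩
  simpa [Function.comp_def] using
    hderiv.scomp t ((hasDerivAt_id t).add_const T).hasDerivWithinAt hshift

theorem isBounded_image_of_tendsto (hx : IsSolutionIn f Z x) (hlim : Tendsto x atTop (𝓝 a)) :
    Bornology.IsBounded (x '' Ici 0) := by
  obtain ⟨S, hS⟩ := eventually_atTop.1 (hlim (ball_mem_nhds a one_pos))
  have hcompact : IsCompact (x '' Icc 0 S) :=
    isCompact_Icc.image_of_continuousOn (hx.continuousOn.mono Icc_subset_Ici_self)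
  refine (hcompact.isBounded.union (isBounded_ball (x := a) (r := 1))).subset ?_
  rintro _ ⟨t, ht, rfl⟩
  exact (le_total t S).imp (fun htS => ⟨t, ⟨ht, htS⟩, rfl⟩) (hS t)

theorem dist_zero_le {K : ℝ≥0} (hf : LipschitzOnWith K f Z) (hT : 0 ≤ T)
    (hx : IsSolutionIn f Z x) (hy : IsSolutionIn f Z y) :
    dist (x 0) (y 0) ≤ dist (x T) (y T) * Real.exp (K * T) := by
  have hderiv {z : ℝ → E} (hz : IsSolutionIn f Z z) (t : ℝ) (ht : t ∈ Ioc 0 T) :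
      HasDerivWithinAt z (f (z t)) (Iic t) t :=
    ((hz t ht.1.le).1.hasDerivAt (Ici_mem_nhds ht.1)).hasDerivWithinAt
  simpa using dist_left_le_of_trajectories_ODE_of_mem (v := fun _ => f) (s := fun _ => Z) hT
    (fun _ _ => hf)
    (hx.continuousOn.mono Icc_subset_Ici_self) (hderiv hx) (fun t ht => (hx t ht.1.le).2)
    (hy.continuousOn.mono Icc_subset_Ici_self) (hderiv hy) (fun t ht => (hy t ht.1.le).2)

end IsSolutionIn

theorem dimH_entrySet_le {K : ℝ≥0} (hf : LipschitzOnWith K f Z) (hT : 0 ≤ T) :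
    dimH (entrySet f Z N T) ≤ dimH (viabilityKernel f (Z ∩ N)) := by
  choose! x hx hx0 hxN using fun (x₀ : E) (h : x₀ ∈ entrySet f Z N T) => h
  have hanti : AntilipschitzWith ⟨Real.exp (K * T), (Real.exp_pos _).le⟩
      ((entrySet f Z N T).domRestrict fun x₀ => x x₀ T) :=
    AntilipschitzWith.of_le_mul_dist fun ⟨x₀, hx₀⟩ ⟨y₀, hy₀⟩ => by
      have hdist := (hx x₀ hx₀).dist_zero_le hf hT (hx y₀ hy₀)
      rwa [hx0 x₀ hx₀, hx0 y₀ hy₀, mul_comm] at hdist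
  refine dimH_le_of_antilipschitzWith_domRestrict hanti fun x₀ hx₀ => ?_
  exact ⟨fun t => x x₀ (t + T), ((hx x₀ hx₀).comp_add_const hT).inter
    fun t ht => hxN x₀ hx₀ _ (le_add_of_nonneg_left ht), congrArg (x x₀) (zero_add T)⟩

theorem stableSet_subset_iUnion_entrySet (hN : N ∈ 𝓝 a) :
    stableSet f Z a ⊆ ⋃ (T : ℕ) (R : ℕ), entrySet f (Z ∩ closedBall 0 R) N T := by
  rintro x₀ ⟨x, hx, hx0, hlim⟩
  obtain ⟨S, hS⟩ := eventually_atTop.1 (hlim hN)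
  obtain ⟨T, hT⟩ := exists_nat_ge S
  obtain ⟨r, hr⟩ := (hx.isBounded_image_of_tendsto hlim).subset_closedBall 0
  obtain ⟨R, hR⟩ := exists_nat_ge r
  exact mem_iUnion₂.2 ⟨T, R, x,
    hx.inter fun t ht => closedBall_subset_closedBall hR (hr (mem_image_of_mem x ht)),
    hx0, fun t ht => hS t (hT.trans ht)⟩

theorem viabilityKernel_mono {Z' : Set E} (h : Z ⊆ Z') :
    viabilityKernel f Z ⊆ viabilityKernel f Z' := by
  rintro x₀ ⟨x, hx, hx0⟩
  exact ⟨x, fun t ht => ⟨(hx t ht).1, h (hx t ht).2⟩, hx0⟩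

theorem dimH_stableSet_le_dimH_viabilityKernel [ProperSpace E] (hf : LocallyLipschitz f)
    (hN : N ∈ 𝓝 a) : dimH (stableSet f Z a) ≤ dimH (viabilityKernel f (Z ∩ N)) := by
  refine (dimH_mono (stableSet_subset_iUnion_entrySet hN)).trans ?_
  simp only [dimH_iUnion, iSup_le_iff]
  intro T R
  obtain ⟨K, hK⟩ := hf.locallyLipschitzOn.exists_lipschitzOnWith_of_compact
    (isCompact_closedBall (0 : E) R)
  exact (dimH_entrySet_le (hK.mono inter_subset_right) T.cast_nonneg).trans
    (dimH_mono (viabilityKernel_mono (inter_subset_inter_left N inter_subset_left)))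

end Solutions

section UnstableEquilibrium

variable {E : Type*} [NormedAddCommGroup E] [InnerProductSpace ℝ E] {f : E → E}
  {A X : E →L[ℝ] E} {μ : ℝ}

theorem IsLyapunovOperator.inner_sub_nonpos (hX : IsLyapunovOperator A X μ) (hμ : 0 < μ)
    {Z : Set E} {c : ℝ≥0} (hf : ApproximatesLinearOn f A Z c) (hc : 2 * ‖X‖ * c ≤ 1)
    (hZ : Bornology.IsBounded Z) {x y : ℝ → E} (hx : IsSolutionIn f Z x)
    (hy : IsSolutionIn f Z y) : ⟪x 0 - y 0, X (x 0 - y 0)⟫ ≤ 0 := by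
  set w : ℝ → E := fun t => x t - y t
  have hderiv (t : ℝ) (ht : 0 ≤ t) : HasDerivWithinAt (fun t => ⟪w t, X (w t)⟫)
      (⟪w t, X (f (x t) - f (y t))⟫ + ⟪f (x t) - f (y t), X (w t)⟫) (Ici 0) t :=
    have hw := (hx t ht).1.sub (hy t ht).1
    hw.inner ℝ (X.hasFDerivAt.comp_hasDerivWithinAt t hw)
  refine nonpos_of_mul_le_deriv_of_bddAbove (q := fun t => ⟪w t, X (w t)⟫) hμ hderiv
    (fun t ht => hX.mul_inner_le (hf _ (hx t ht).2 _ (hy t ht).2) hc) ?_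
  obtain ⟨M, hM⟩ := isBounded_iff.1 hZ
  refine ⟨M * (‖X‖ * M), ?_⟩
  rintro _ ⟨t, ht, rfl⟩
  have hwM : ‖w t‖ ≤ M := dist_eq_norm (x t) (y t) ▸ hM (hx t ht).2 (hy t ht).2
  calc ⟪w t, X (w t)⟫ ≤ ‖w t‖ * ‖X (w t)‖ := real_inner_le_norm _ _
    _ ≤ M * (‖X‖ * M) := by
      gcongr
      · exact (norm_nonneg _).trans hwM
      · exact X.le_opNorm_of_le hwM

variable [FiniteDimensional ℝ E] {F : Type*} [NormedAddCommGroup F] [NormedSpace ℝ F]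
  {h : E → F} {h' : E →L[ℝ] F} {a v : E} {lam : ℝ}

theorem exists_mem_nhds_dimH_viabilityKernel_add_one_le (hf : HasStrictFDerivAt f A a)
    (hh : HasStrictFDerivAt h h' a) (hv : v ≠ 0) (hh'v : h' v = 0) (hlam : 0 < lam)
    (hAv : A v = lam • v) :
    ∃ N ∈ 𝓝 a, dimH (viabilityKernel f (h ⁻¹' {0} ∩ N)) + 1 ≤ finrank ℝ h'.ker := by
  obtain ⟨μ, ⟨hμ, hμlam⟩, X, hX⟩ :=
    exists_isLyapunovOperator A (Ioo_infinite (a := 0) (b := 2 * lam) (by positivity))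
  obtain ⟨C, η, hη, hC⟩ := exists_norm_le_mul_norm_orthogonalProjectionOnto X h'
    (hX.inner_pos_of_eigenvector hv hAv hμlam) hh'v
  obtain ⟨c, hc, hcX⟩ := exists_pos_mul_lt one_pos (2 * ‖X‖)
  lift c to ℝ≥0 using hc.le
  obtain ⟨s, hs, hfs⟩ := hf.approximates_deriv_on_nhds (.inr hc)
  obtain ⟨u, hu, hhu⟩ := hh.approximates_deriv_on_nhds (.inr hη)
  refine ⟨s ∩ u ∩ ball a 1, inter_mem (inter_mem hs hu) (ball_mem_nhds a one_pos), ?_⟩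
  set Z := h ⁻¹' {0} ∩ (s ∩ u ∩ ball a 1)
  have hZ : Bornology.IsBounded Z := isBounded_ball.subset fun z hz => hz.2.2
  have hfZ : ApproximatesLinearOn f A Z c := hfs.mono_set fun z hz => hz.2.1.1
  have htangent {y z : E} (hy : y ∈ Z) (hz : z ∈ Z) : ‖h' (y - z)‖ ≤ η * ‖y - z‖ := by
    have happrox := hhu y hy.2.1.2 z hz.2.1.2
    rwa [show h y = 0 from hy.1, show h z = 0 from hz.1, sub_self, zero_sub, norm_neg] at happrox
  have hanti : AntilipschitzWith C ((viabilityKernel f Z).domRestrict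
      ((ℝ ∙ v)ᗮ ⊓ h'.ker).orthogonalProjectionOnto) := by
    refine AntilipschitzWith.of_le_mul_dist ?_
    rintro ⟨_, x, hx, rfl⟩ ⟨_, y, hy, rfl⟩
    simp only [Subtype.dist_eq, dist_eq_norm, domRestrict_apply, ← map_sub]
    exact hC _ (hX.inner_sub_nonpos hμ hfZ hcX.le hZ hx hy)
      (htangent (hx 0 le_rfl).2 (hy 0 le_rfl).2)
  have hdim : dimH (viabilityKernel f Z) ≤ finrank ℝ ((ℝ ∙ v)ᗮ ⊓ h'.ker : Submodule ℝ E) :=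
    (dimH_le_of_antilipschitzWith_domRestrict hanti (mapsTo_univ _ _)).trans_eq
      (Real.dimH_univ_eq_finrank _)
  rw [← finrank_orthogonal_span_singleton_inf_add_one hv hh'v, Nat.cast_add_one]
  gcongr

theorem dimH_stableSet_add_one_le (hfL : LocallyLipschitz f) (hf : HasStrictFDerivAt f A a)
    (hh : HasStrictFDerivAt h h' a) (hv : v ≠ 0) (hh'v : h' v = 0) (hlam : 0 < lam)
    (hAv : A v = lam • v) : dimH (stableSet f (h ⁻¹' {0}) a) + 1 ≤ finrank ℝ h'.ker := by
  obtain ⟨N, hN, hdim⟩ :=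
    exists_mem_nhds_dimH_viabilityKernel_add_one_le hf hh hv hh'v hlam hAv
  exact (add_le_add_left (dimH_stableSet_le_dimH_viabilityKernel hfL hN) 1).trans hdim

theorem stmt_2_general [MeasurableSpace E] [BorelSpace E] {ι : Type*} [Countable ι]
    (hfL : LocallyLipschitz f) {xs : ι → E} {A : ι → E →L[ℝ] E} {h' : ι → E →L[ℝ] F}
    (hf : ∀ j, HasStrictFDerivAt f (A j) (xs j)) (hh : ∀ j, HasStrictFDerivAt h (h' j) (xs j))
    (hunstable : ∀ j, ∃ v, v ≠ 0 ∧ h' j v = 0 ∧ ∃ lam : ℝ, 0 < lam ∧ A j v = lam • v)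
    {d : ℝ} (hd : ∀ j, finrank ℝ (h' j).ker < d + 1) :
    μH[d] (⋃ j, stableSet f (h ⁻¹' {0}) (xs j)) = 0 := by
  refine measure_iUnion_null fun j => ?_
  obtain ⟨v, hv, hh'v, lam, hlam, hAv⟩ := hunstable j
  have hdim := dimH_stableSet_add_one_le hfL (hf j) (hh j) hv hh'v hlam hAv
  have hpos : (1 : ℝ) ≤ finrank ℝ (h' j).ker := by
    exact_mod_cast le_add_self.trans hdim
  lift d to ℝ≥0 using by linarith [hd j]
  have hlt : (finrank ℝ (h' j).ker : ℝ≥0∞) < d + 1 := by exact_mod_cast hd j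
  exact hausdorffMeasure_of_dimH_lt (lt_of_add_lt_add_right (hdim.trans_lt hlt))

end UnstableEquilibrium

/- `xs j`, `j : Fin k`, enumerates the equilibria `x₂*, …, x_k*`. -/
theorem stmt_2 (n k : ℕ)
    (f : EuclideanSpace ℝ (Fin n) → EuclideanSpace ℝ (Fin n)) (hf : ContDiff ℝ 1 f)
    (h : EuclideanSpace ℝ (Fin n) → ℝ) (hh : ContDiff ℝ 1 h)
    (hgrad_ne : ∀ x, h x = 0 → gradient h x ≠ 0)
    (xs : Fin k → EuclideanSpace ℝ (Fin n))
    (hxsH : ∀ j, h (xs j) = 0)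
    (hxs_eq : ∀ j, f (xs j) = 0)
    -- each equilibrium has an unstable eigendirection tangent to `H`
    (hunstable : ∀ j : Fin k,
      ∃ v : EuclideanSpace ℝ (Fin n), v ≠ 0 ∧ ⟪gradient h (xs j), v⟫ = 0 ∧
        ∃ lam : ℝ, 0 < lam ∧ fderiv ℝ f (xs j) v = lam • v) :
    MeasureTheory.Measure.hausdorffMeasure ((n : ℝ) - 1)
      {x₀ : EuclideanSpace ℝ (Fin n) | h x₀ = 0 ∧
        ∃ j : Fin k, ∃ x : ℝ → EuclideanSpace ℝ (Fin n),
          IsGlobalSolutionOn f h x ∧ x 0 = x₀ ∧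
          Filter.Tendsto x Filter.atTop (nhds (xs j))} = 0 := by
  have hdim (j : Fin k) : (finrank ℝ (fderiv ℝ h (xs j)).ker : ℝ) < (n : ℝ) - 1 + 1 := by
    simpa using (Nat.lt_add_one _).trans_eq
      (finrank_ker_fderiv_add_one_of_gradient_ne_zero (hgrad_ne _ (hxsH j)))
  exact measure_mono_null (fun _ ⟨_, j, hx⟩ => mem_iUnion.2 ⟨j, hx⟩) <|
    stmt_2_general hf.locallyLipschitz (fun j => hf.hasStrictFDerivAt one_ne_zero)
      (fun j => hh.hasStrictFDerivAt one_ne_zero)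
      (by simpa only [inner_gradient_left] using hunstable) hdim
end

section
/- Let X be a nonempty metric space and let φ : [0,∞) × X → X be continuous with φ(0, x) = x for all x and φ(t + s, x) = φ(t, φ(s, x)) for all t, s ≥ 0 and x ∈ X. Suppose x* ∈ X satisfies: φ(t, x*) = x* for all t ≥ 0; x* is Lyapunov stable (for every ε > 0 there exists δ > 0 such that d(x, x*) < δ implies d(φ(t, x), x*) < ε for all t ≥ 0); and x* is globally attractive (for every x ∈ X, φ(t, x) → x* as t → ∞). Then X is contractible. -/
/-!
Stability upgrades pointwise attraction to locally uniform attraction: once the orbit of `x₀` enters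
a neighbourhood of the equilibrium whose forward orbits stay close to it, so do the orbits of all
points near `x₀`, at the same time. Hence the semiflow, extended to time `∞` by the constant map to
the equilibrium, is continuous on `[0, ∞] × X`. As `[0, ∞]` is homeomorphic to `[0, 1]`, this
extension is a homotopy from the identity to a constant map.
-/

open Filter Function Set Topology
open scoped ENNReal NNReal

section HomotopyAtInfinity

theorem ennreal_nhds_top_eq_pure_sup_map_coe_atTop :
    𝓝 ∞ = pure ∞ ⊔ map ((↑) : ℝ≥0 → ℝ≥0∞) atTop := by
  refine le_antisymm (fun s hs => ?_)
    (sup_le (pure_le_nhds ∞) (ENNReal.tendsto_coe_nhds_top.2 tendsto_id))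
  obtain ⟨htop, hcoe⟩ := mem_sup.1 hs
  obtain ⟨a, ha⟩ := mem_atTop_sets.1 (mem_map.1 hcoe)
  filter_upwards [Ioi_mem_nhds (ENNReal.coe_lt_top (r := a))] with t ht
  induction t with
  | top => exact htop
  | coe t => exact ha t (ENNReal.coe_lt_coe.1 ht).le

variable {X Y : Type*}

/-- The extension of a family of maps `F t`, `t ∈ [0, ∞)`, to `[0, ∞] × X` by the map `g` at time
`∞`. -/
def extendToTop (F : ℝ≥0 → X → Y) (g : X → Y) (p : ℝ≥0∞ × X) : Y :=
  ENNReal.recTopCoe (g p.2) (fun t => F t p.2) p.1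

variable [TopologicalSpace X] [TopologicalSpace Y] {F : ℝ≥0 → X → Y}

theorem continuous_extendToTop {g : X → Y} (hF : Continuous (uncurry F)) (hg : Continuous g)
    (hlim : ∀ x, Tendsto (uncurry F) (atTop ×ˢ 𝓝 x) (𝓝 (g x))) :
    Continuous (extendToTop F g) := by
  refine continuous_iff_continuousAt.2 fun ⟨t, x⟩ => ?_
  induction t with
  | top =>
    rw [ContinuousAt, nhds_prod_eq, ennreal_nhds_top_eq_pure_sup_map_coe_atTop, sup_prod,
      tendsto_sup, pure_prod, tendsto_map'_iff, prod_map_left, tendsto_map'_iff]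
    exact ⟨hg.continuousAt, hlim x⟩
  | coe t =>
    have hcoe : IsOpenEmbedding (Prod.map (↑) id : ℝ≥0 × X → ℝ≥0∞ × X) :=
      ENNReal.isOpenEmbedding_coe.prodMap .id
    exact (hcoe.continuousAt_iff (x := (t, x))).1 hF.continuousAt

theorem homotopic_of_tendsto_atTop (f g : C(X, Y)) (hF : Continuous (uncurry F)) (hzero : F 0 = f)
    (hlim : ∀ x, Tendsto (uncurry F) (atTop ×ˢ 𝓝 x) (𝓝 (g x))) : f.Homotopic g :=
  let e := ENNReal.orderIsoUnitIntervalBirational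
  ⟨{ toFun p := extendToTop F g (e.symm p.1, p.2)
     continuous_toFun := (continuous_extendToTop hF g.continuous hlim).comp
       (e.symm.continuous.prodMap continuous_id)
     map_zero_left x := by
       have he : e.symm 0 = 0 := e.symm.map_bot
       rw [he]
       exact congrFun hzero x
     map_one_left x := by
       have he : e.symm 1 = ∞ := e.symm.map_top
       rw [he]
       rfl }⟩

end HomotopyAtInfinity

section Stability

variable {τ X : Type*} [TopologicalSpace τ] [AddCommMonoid τ]

/-- Lyapunov stability of a point under a flow: orbits starting close enough to the point remain
close to it at all times. For time `ℝ≥0` this is the usual notion for semiflows. Being an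
equilibrium is not part of the definition; in a T₁ space it follows. -/
def IsLyapunovStable [TopologicalSpace X] (φ : Flow τ X) (a : X) : Prop :=
  ∀ U ∈ 𝓝 a, ∀ᶠ x in 𝓝 a, ∀ t, φ t x ∈ U

theorem isLyapunovStable_iff_dist [PseudoMetricSpace X] {φ : Flow τ X} {a : X} :
    IsLyapunovStable φ a ↔
      ∀ ε > 0, ∃ δ > 0, ∀ x, dist x a < δ → ∀ t, dist (φ t x) a < ε :=
  (Metric.nhds_basis_ball.forall_iff fun _ _ hUV hU => hU.mono fun _ hx t => hUV (hx t)).trans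
    (forall₂_congr fun _ _ => Metric.eventually_nhds_iff)

theorem IsLyapunovStable.tendsto_atTop_prod_nhds [TopologicalSpace X] [Preorder τ]
    [IsDirectedOrder τ] [ExistsAddOfLE τ] {φ : Flow τ X} {a x₀ : X} (hstable : IsLyapunovStable φ a)
    (hattract : Tendsto (φ · x₀) atTop (𝓝 a)) :
    Tendsto (uncurry φ) (atTop ×ˢ 𝓝 x₀) (𝓝 a) := by
  intro U hU
  obtain ⟨T, hT⟩ : ∃ T, ∀ᶠ y in 𝓝 (φ T x₀), ∀ t, φ t y ∈ U :=
    (hattract.eventually (hstable U hU).eventually_nhds).exists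
  have hnear : ∀ᶠ x in 𝓝 x₀, ∀ t, φ t (φ T x) ∈ U := (φ.continuous_toFun T).continuousAt hT
  rw [mem_map]
  filter_upwards [prod_mem_prod (Ici_mem_atTop T) hnear] with ⟨t, x⟩ ⟨hTt, hx⟩
  obtain ⟨s, rfl⟩ := exists_add_of_le hTt
  rw [mem_preimage, uncurry_apply_pair, add_comm, φ.map_add]
  exact hx s

end Stability

/-- The semiflow, with time in `ℝ≥0`, given by maps `φ t` indexed by real `t` of which only those
with `0 ≤ t` matter. -/
def semiflowOfReal {X : Type*} [TopologicalSpace X] (φ : ℝ → X → X)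
    (hcont : ContinuousOn (fun p : ℝ × X => φ p.1 p.2) (Ici 0 ×ˢ univ))
    (hid : ∀ x, φ 0 x = x)
    (hsemigroup : ∀ t s : ℝ, 0 ≤ t → 0 ≤ s → ∀ x, φ (t + s) x = φ t (φ s x)) : Flow ℝ≥0 X where
  toFun t := φ t
  cont' := hcont.comp_continuous (f := fun p : ℝ≥0 × X => ((p.1 : ℝ), p.2)) (by fun_prop)
    fun p => ⟨p.1.2, mem_univ p.2⟩
  map_add' t s := hsemigroup t s t.2 s.2
  map_zero' := hid

theorem stmt_3_general {X : Type*} [TopologicalSpace X] {φ : Flow ℝ≥0 X} {a : X}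
    (hstable : IsLyapunovStable φ a) (hattract : ∀ x, Tendsto (φ · x) atTop (𝓝 a)) :
    ContractibleSpace X :=
  (contractible_iff_id_nullhomotopic X).2
    ⟨a, homotopic_of_tendsto_atTop _ _ φ.cont' φ.map_zero fun x =>
      hstable.tendsto_atTop_prod_nhds (hattract x)⟩

/-- If a continuous semiflow on a nonempty metric space has a Lyapunov-stable,
globally attractive equilibrium, then the space is contractible. -/
theorem stmt_3 (X : Type*) [MetricSpace X] [Nonempty X]
    (φ : ℝ → X → X)
    (hcont : ContinuousOn (fun p : ℝ × X => φ p.1 p.2) (Set.Ici 0 ×ˢ Set.univ))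
    (hid : ∀ x : X, φ 0 x = x)
    (hsemigroup : ∀ t s : ℝ, 0 ≤ t → 0 ≤ s → ∀ x : X, φ (t + s) x = φ t (φ s x))
    (xstar : X)
    (heq : ∀ t : ℝ, 0 ≤ t → φ t xstar = xstar)
    (hstable : ∀ ε > 0, ∃ δ > 0, ∀ x : X, dist x xstar < δ →
      ∀ t : ℝ, 0 ≤ t → dist (φ t x) xstar < ε)
    (hattract : ∀ x : X,
      Filter.Tendsto (fun t : ℝ => φ t x) Filter.atTop (nhds xstar)) :
    ContractibleSpace X := by
  have hstable' : IsLyapunovStable (semiflowOfReal φ hcont hid hsemigroup) xstar :=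
    isLyapunovStable_iff_dist.2 fun ε hε =>
      (hstable ε hε).imp fun _ hδ => hδ.imp_right fun hball x hx t => hball x hx t t.2
  exact stmt_3_general hstable' fun x => (hattract x).comp (NNReal.tendsto_coe_atTop.2 tendsto_id)
end

section
/- Let n, d ∈ ℕ and let p be a polynomial in n real variables. Let M denote the (finite) set of exponent multi-indices α : {1,…,n} → ℕ with |α| = α₁ + ⋯ + αₙ ≤ d. Then the following are equivalent: (i) there exist m ∈ ℕ and polynomials p₁, …, p_m, each of total degree at most d, such that p = Σ_{i=1}^{m} pᵢ²; (ii) there exists a symmetric positive semidefinite matrix Q indexed by M × M such that p = Σ_{α ∈ M} Σ_{β ∈ M} Q(α, β) · x^{α+β}, where x^{γ} denotes the monomial x₁^{γ₁} ⋯ xₙ^{γₙ}. -/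
/-!
Expanding squares of linear combinations of `z α`, `α ∈ M`, shows that sums of such squares are
exactly the elements `∑ α ∈ M, ∑ β ∈ M, (∑ i, c i α * c i β) • (z α * z β)`. By the spectral
theorem, the matrices with entries `∑ i, c i α * c i β` are exactly the positive semidefinite ones.
For polynomials, `z α` is the monomial with exponent `α`: the monomials of degree at most `d` span
the polynomials of total degree at most `d`.
-/

section GramMatrix

variable {ι : Type*}

theorem finset_restrict_surjective {R : Type*} [Nonempty R] (M : Finset ι) :
    Function.Surjective (M.restrict : (ι → R) → M → R) :=
  Subtype.surjective_restrict (· ∈ M)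

theorem posSemidef_restrict_iff {R : Type*} [Ring R] [PartialOrder R] [StarRing R] [TrivialStar R]
    (M : Finset ι) (Q : ι → ι → R) :
    (Matrix.of fun α β : M => Q α β).PosSemidef ↔
      (∀ α ∈ M, ∀ β ∈ M, Q α β = Q β α) ∧
        ∀ w : ι → R, 0 ≤ ∑ α ∈ M, ∑ β ∈ M, w α * Q α β * w β := by
  have hermitian_iff : (Matrix.of fun α β : M => Q α β).IsHermitian ↔
      ∀ α ∈ M, ∀ β ∈ M, Q α β = Q β α := by
    simp only [Matrix.IsHermitian.ext_iff, Matrix.of_apply, star_trivial, Subtype.forall]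
    exact ⟨fun h α hα β hβ => h β hβ α hα, fun h α hα β hβ => h β hβ α hα⟩
  have form_eq (w : ι → R) : star (M.restrict w) ⬝ᵥ
      ((Matrix.of fun α β : M => Q α β).mulVec (M.restrict w)) =
        ∑ α ∈ M, ∑ β ∈ M, w α * Q α β * w β := by
    simp [dotProduct, Matrix.mulVec, ← Finset.sum_coe_sort M, Finset.mul_sum, mul_assoc]
  rw [Matrix.posSemidef_iff_dotProduct_mulVec, hermitian_iff, (finset_restrict_surjective M).forall]
  simp only [form_eq]

theorem exists_eq_sum_mul_iff_posSemidef (M : Finset ι) (Q : ι → ι → ℝ) :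
    (∃ (m : ℕ) (c : Fin m → ι → ℝ), ∀ α ∈ M, ∀ β ∈ M, Q α β = ∑ i, c i α * c i β) ↔
      (Matrix.of fun α β : M => Q α β).PosSemidef := by
  simp only [Matrix.posSemidef_iff_eq_sum_vecMulVec,
    (finset_restrict_surjective M).comp_left.exists, ← Matrix.ext_iff, Matrix.sum_apply,
    Matrix.vecMulVec_apply, Matrix.of_apply, star_trivial, Function.comp_apply,
    Finset.restrict, Subtype.forall]

theorem sum_sq_sum_smul {κ R A : Type*} [CommSemiring R] [Semiring A] [Algebra R A]
    (z : ι → A) (M : Finset ι) (s : Finset κ) (c : κ → ι → R) :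
    ∑ i ∈ s, (∑ α ∈ M, c i α • z α) ^ 2 =
      ∑ α ∈ M, ∑ β ∈ M, (∑ i ∈ s, c i α * c i β) • (z α * z β) := by
  simp only [sq, Finset.sum_mul_sum, smul_mul_smul_comm, Finset.sum_smul]
  rw [Finset.sum_comm]
  exact Finset.sum_congr rfl fun α _ => Finset.sum_comm

theorem stmt_4_general {A : Type*} [Semiring A] [Algebra ℝ A] (z : ι → A) (M : Finset ι) (p : A) :
    (∃ (m : ℕ) (ps : Fin m → A),
        (∀ i, ps i ∈ Submodule.span ℝ (z '' M)) ∧ p = ∑ i, (ps i) ^ 2) ↔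
    (∃ Q : ι → ι → ℝ,
        (∀ α ∈ M, ∀ β ∈ M, Q α β = Q β α) ∧
        (∀ w : ι → ℝ, 0 ≤ ∑ α ∈ M, ∑ β ∈ M, w α * Q α β * w β) ∧
        p = ∑ α ∈ M, ∑ β ∈ M, Q α β • (z α * z β)) := by
  simp only [← and_assoc, ← posSemidef_restrict_iff, ← exists_eq_sum_mul_iff_posSemidef,
    Submodule.mem_span_image_finset_iff_exists_fun']
  constructor
  · rintro ⟨m, ps, hps, rfl⟩
    choose c hc using hps
    refine ⟨fun α β => ∑ i, c i α * c i β, ⟨m, c, fun _ _ _ _ => rfl⟩, ?_⟩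
    simp only [← hc, sum_sq_sum_smul]
  · rintro ⟨Q, ⟨m, c, hQ⟩, rfl⟩
    refine ⟨m, fun i => ∑ α ∈ M, c i α • z α, fun i => ⟨c i, rfl⟩, ?_⟩
    rw [sum_sq_sum_smul]
    exact Finset.sum_congr rfl fun α hα => Finset.sum_congr rfl fun β hβ => by rw [hQ α hα β hβ]

end GramMatrix

theorem totalDegree_le_iff_mem_span_monomial {σ R : Type*} [CommSemiring R]
    {q : MvPolynomial σ R} {d : ℕ} :
    q.totalDegree ≤ d ↔ q ∈ Submodule.span R
      ((MvPolynomial.monomial · 1) '' {α : σ →₀ ℕ | (α.sum fun _ e => e) ≤ d}) := by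
  rw [← MvPolynomial.mem_restrictTotalDegree, MvPolynomial.restrictTotalDegree,
    MvPolynomial.restrictSupport_eq_span]

/-- A polynomial is a sum of squares of polynomials of degree at most `d` iff it admits
a positive semidefinite Gram matrix representation indexed by the multi-indices of
total degree at most `d`. -/
theorem stmt_4 (n d : ℕ) (p : MvPolynomial (Fin n) ℝ)
    (M : Finset (Fin n →₀ ℕ))
    (hM : ∀ α : Fin n →₀ ℕ, α ∈ M ↔ (α.sum fun _ e => e) ≤ d) :
    (∃ (m : ℕ) (ps : Fin m → MvPolynomial (Fin n) ℝ),
        (∀ i, (ps i).totalDegree ≤ d) ∧ p = ∑ i, (ps i) ^ 2) ↔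
    (∃ Q : (Fin n →₀ ℕ) → (Fin n →₀ ℕ) → ℝ,
        (∀ α ∈ M, ∀ β ∈ M, Q α β = Q β α) ∧
        (∀ w : (Fin n →₀ ℕ) → ℝ, 0 ≤ ∑ α ∈ M, ∑ β ∈ M, w α * Q α β * w β) ∧
        p = ∑ α ∈ M, ∑ β ∈ M, MvPolynomial.monomial (α + β) (Q α β)) := by
  have setOf_degree_le_eq : {α : Fin n →₀ ℕ | (α.sum fun _ e => e) ≤ d} = M :=
    Set.ext fun α => (hM α).symm
  simpa [totalDegree_le_iff_mem_span_monomial, setOf_degree_le_eq, MvPolynomial.smul_monomial] using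
    stmt_4_general (fun α => MvPolynomial.monomial α (1 : ℝ)) M p
end

section
/- Let f : ℝⁿ → ℝⁿ be continuous, h : ℝⁿ → ℝ continuous, and H = {x ∈ ℝⁿ : h(x) = 0} with 0 ∈ H. Let E = {x₁*, …, x_k*} ⊆ H be a finite set of pairwise distinct points with x₁* = 0 and f(xᵢ*) = 0 for all i. Suppose V : ℝⁿ → ℝ is continuously differentiable with V(0) = 0, V(x) > 0 for every x ∈ H with x ≠ 0, V radially unbounded on H (for every M > 0 there is R > 0 such that x ∈ H and ‖x‖ > R imply V(x) > M), and there exists ε > 0 with ⟨∇V(x), f(x)⟩ ≤ −ε · ∏_{i=1}^{k} ‖x − xᵢ*‖² for all x ∈ H. Then every global solution on H converges to E: for every δ > 0 there exists T ≥ 0 such that min_{1 ≤ i ≤ k} ‖x(t) − xᵢ*‖ < δ for all t ≥ T. -/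
open scoped RealInnerProductSpace

/-!
Along a solution `x` in `H`, `V ∘ x` decreases, so the speed `‖f (x t)‖` stays bounded and the
distance `d` from `x t` to the set of equilibria is uniformly continuous in `t`. As in Barbalat's
lemma, whenever `d ≥ η` at some instant, `d ≥ η / 2` for a fixed further time, over which `V ∘ x`
drops by a fixed amount. Since `V ∘ x` converges, this happens at no large time.
-/

open Bornology Filter Metric Set Topology

theorem sub_le_mul_sub_of_hasDerivWithinAt_le {g g' : ℝ → ℝ} {a b C : ℝ} (hab : a ≤ b)
    (hg : ∀ t ∈ Icc a b, HasDerivWithinAt g (g' t) (Icc a b) t) (hC : ∀ t ∈ Icc a b, g' t ≤ C) :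
    g b - g a ≤ C * (b - a) := by
  have hderiv (t : ℝ) (ht : t ∈ interior (Icc a b)) : HasDerivAt g (g' t) t :=
    (hg t (interior_subset ht)).hasDerivAt (mem_interior_iff_mem_nhds.1 ht)
  refine (convex_Icc a b).image_sub_le_mul_sub_of_deriv_le
    (fun t ht => (hg t ht).continuousWithinAt)
    (fun t ht => (hderiv t ht).differentiableAt.differentiableWithinAt) (fun t ht => ?_)
    a (left_mem_Icc.2 hab) b (right_mem_Icc.2 hab) hab
  rw [(hderiv t ht).deriv]
  exact hC t (interior_subset ht)

theorem antitoneOn_of_forall_hasDerivWithinAt_nonpos {g g' : ℝ → ℝ} {s : Set ℝ} (hs : Convex ℝ s)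
    (hg : ∀ t ∈ s, HasDerivWithinAt g (g' t) s t) (hg' : ∀ t ∈ s, g' t ≤ 0) : AntitoneOn g s :=
  antitoneOn_of_hasDerivWithinAt_nonpos hs (fun t ht => (hg t ht).continuousWithinAt)
    (fun t ht => (hg t (interior_subset ht)).mono interior_subset)
    (fun t ht => hg' t (interior_subset ht))

theorem exists_tendsto_atTop_of_antitoneOn_Ici {ι R : Type*} [LinearOrder ι]
    [ConditionallyCompleteLattice R] [TopologicalSpace R] [InfConvergenceClass R] {g : ι → R}
    {a : ι} (hg : AntitoneOn g (Ici a)) (hbdd : BddBelow (g '' Ici a)) :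
    ∃ l, Tendsto g atTop (𝓝 l) := by
  rw [image_eq_range] at hbdd
  exact ⟨_, tendsto_comp_val_Ici_atTop.1 (tendsto_atTop_ciInf (antitoneOn_iff_antitone.1 hg) hbdd)⟩

theorem eventually_sub_lt_of_antitoneOn_Ici {g : ℝ → ℝ} {a : ℝ} (hg : AntitoneOn g (Ici a))
    (hbdd : BddBelow (g '' Ici a)) (τ : ℝ) {c : ℝ} (hc : 0 < c) :
    ∀ᶠ t in atTop, g t - g (t + τ) < c := by
  obtain ⟨l, hl⟩ := exists_tendsto_atTop_of_antitoneOn_Ici hg hbdd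
  have hsub := hl.sub (hl.comp (tendsto_atTop_add_const_right atTop τ tendsto_id))
  rw [sub_self] at hsub
  exact hsub.eventually_lt_const hc

theorem tendsto_zero_of_hasDerivWithinAt_le_neg {g g' d α : ℝ → ℝ} {a : ℝ}
    (hg : ∀ t ∈ Ici a, HasDerivWithinAt g (g' t) (Ici a) t) (hbdd : BddBelow (g '' Ici a))
    (hα : MonotoneOn α (Ici 0)) (hα0 : 0 ≤ α 0) (hαpos : ∀ r, 0 < r → 0 < α r)
    (hd : UniformContinuousOn d (Ici a)) (hd0 : ∀ t ∈ Ici a, 0 ≤ d t)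
    (hg' : ∀ t ∈ Ici a, g' t ≤ -α (d t)) :
    Tendsto d atTop (𝓝 0) := by
  have hanti : AntitoneOn g (Ici a) :=
    antitoneOn_of_forall_hasDerivWithinAt_nonpos (convex_Ici a) hg fun t ht => by
      linarith [hg' t ht, hα self_mem_Ici (hd0 t ht) (hd0 t ht)]
  rw [tendsto_order]
  refine ⟨fun η hη => (eventually_ge_atTop a).mono fun t ht => hη.trans_le (hd0 t ht),
    fun η hη => ?_⟩
  obtain ⟨τ, hτ, hclose⟩ := Metric.uniformContinuousOn_iff_le.1 hd (η / 2) (half_pos hη)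
  have hc : 0 < α (η / 2) := hαpos _ (half_pos hη)
  filter_upwards [eventually_ge_atTop a,
    eventually_sub_lt_of_antitoneOn_Ici hanti hbdd τ (mul_pos hc hτ)] with t ht hsmall
  by_contra! hfar
  have hdrop : g (t + τ) - g t ≤ -α (η / 2) * (t + τ - t) := by
    have hsub : Icc t (t + τ) ⊆ Ici a := fun s hs => ht.trans hs.1
    refine sub_le_mul_sub_of_hasDerivWithinAt_le (by linarith)
      (fun s hs => (hg s (hsub hs)).mono hsub) fun s hs => ?_
    have hst : dist s t ≤ τ := by
      rw [Real.dist_eq, abs_of_nonneg (sub_nonneg.2 hs.1)]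
      linarith [hs.2]
    have hds : η / 2 ≤ d s := by
      linarith [(abs_le.1 (hclose s (hsub hs) t ht hst)).1]
    linarith [hg' s (hsub hs), hα (half_pos hη).le (hd0 s (hsub hs)) hds]
  linarith

theorem infDist_range_pow_card_le_prod_dist {X ι : Type*} [PseudoMetricSpace X] [Fintype ι]
    (p : ι → X) (y : X) : infDist y (range p) ^ Fintype.card ι ≤ ∏ i, dist y (p i) := by
  rw [← Finset.card_univ, ← Finset.prod_const]
  exact Finset.prod_le_prod (fun _ _ => infDist_nonneg)
    fun i _ => infDist_le_dist_of_mem (mem_range_self i)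

section Lyapunov

variable {E : Type*} [NormedAddCommGroup E] [NormedSpace ℝ E] {f : E → E} {H : Set E} {V : E → ℝ}
  {x : ℝ → E}

theorem uniformContinuousOn_of_isIntegralCurveOn_of_isBounded_image {s : Set ℝ} (hs : Convex ℝ s)
    (hx : IsIntegralCurveOn x (fun _ => f) s) {S : Set E} (hxS : MapsTo x s S)
    (hf : IsBounded (f '' S)) : UniformContinuousOn x s := by
  obtain ⟨C, hC⟩ := hf.exists_norm_le
  refine (hs.lipschitzOnWith_of_nnnorm_hasDerivWithin_le (C := C.toNNReal) hx
    fun t ht => ?_).uniformContinuousOn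
  exact NNReal.le_toNNReal_of_coe_le (hC _ (mem_image_of_mem f (hxS ht)))

theorem tendsto_infDist_zero_of_fderiv_le_neg {A : Set E} {α : ℝ → ℝ}
    (hα : MonotoneOn α (Ici 0)) (hα0 : 0 ≤ α 0) (hαpos : ∀ r, 0 < r → 0 < α r)
    (hV : ∀ y ∈ H, DifferentiableAt ℝ V y) (hVbdd : BddBelow (V '' H))
    (hdot : ∀ y ∈ H, fderiv ℝ V y (f y) ≤ -α (infDist y A))
    (hx : IsIntegralCurveOn x (fun _ => f) (Ici 0)) (hxH : MapsTo x (Ici 0) H)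
    (hf : IsBounded (f '' {y ∈ H | V y ≤ V (x 0)})) :
    Tendsto (fun t => infDist (x t) A) atTop (𝓝 0) := by
  have hderiv (t : ℝ) (ht : t ∈ Ici 0) :=
    (hV _ (hxH ht)).hasFDerivAt.comp_hasDerivWithinAt t (hx t ht)
  have hanti : AntitoneOn (V ∘ x) (Ici 0) :=
    antitoneOn_of_forall_hasDerivWithinAt_nonpos (convex_Ici 0) hderiv fun t ht => by
      have hd0 : 0 ≤ infDist (x t) A := infDist_nonneg
      linarith [hdot _ (hxH ht), hα self_mem_Ici hd0 hd0]
  have hsublevel : MapsTo x (Ici 0) {y ∈ H | V y ≤ V (x 0)} :=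
    fun t ht => ⟨hxH ht, hanti self_mem_Ici ht ht⟩
  refine tendsto_zero_of_hasDerivWithinAt_le_neg hderiv ?_ hα hα0 hαpos ?_
    (fun t _ => infDist_nonneg) (fun t ht => hdot _ (hxH ht))
  · rw [image_comp]
    exact hVbdd.mono (image_mono hxH.image_subset)
  · exact (uniformContinuous_infDist_pt A).comp_uniformContinuousOn
      (uniformContinuousOn_of_isIntegralCurveOn_of_isBounded_image (convex_Ici 0) hx hsublevel
        hf)

theorem stmt_7_general {ι : Type*} [Fintype ι] [Nonempty ι] {p : ι → E} {ε : ℝ} (hε : 0 < ε)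
    (hV : ∀ y ∈ H, DifferentiableAt ℝ V y) (hVbdd : BddBelow (V '' H))
    (hf : IsBounded (f '' {y ∈ H | V y ≤ V (x 0)}))
    (hdot : ∀ y ∈ H, fderiv ℝ V y (f y) ≤ -ε * ∏ i, ‖y - p i‖ ^ 2)
    (hx : IsIntegralCurveOn x (fun _ => f) (Ici 0)) (hxH : MapsTo x (Ici 0) H)
    {δ : ℝ} (hδ : 0 < δ) : ∃ T, 0 ≤ T ∧ ∀ t ≥ T, ∃ i, ‖x t - p i‖ < δ := by
  have hα : MonotoneOn (fun r : ℝ => ε * (r ^ Fintype.card ι) ^ 2) (Ici 0) := by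
    intro r (hr : 0 ≤ r) s _ hrs
    dsimp only
    gcongr
  have hdist : Tendsto (fun t => infDist (x t) (range p)) atTop (𝓝 0) := by
    refine tendsto_infDist_zero_of_fderiv_le_neg hα (by positivity) (fun r hr => by positivity)
      hV hVbdd (fun y hy => ?_) hx hxH hf
    have hprod : (infDist y (range p) ^ Fintype.card ι) ^ 2 ≤ ∏ i, ‖y - p i‖ ^ 2 := by
      simp only [Finset.prod_pow, ← dist_eq_norm]
      gcongr
      · exact pow_nonneg infDist_nonneg _
      · exact infDist_range_pow_card_le_prod_dist p y
    linarith [hdot y hy, mul_le_mul_of_nonneg_left hprod hε.le]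
  obtain ⟨T, hT, hlt⟩ := (atTop_basis' 0).eventually_iff.1 (hdist.eventually_lt_const hδ)
  refine ⟨T, hT, fun t ht => ?_⟩
  simpa only [infDist_lt_iff (range_nonempty p), exists_range_iff, dist_eq_norm] using hlt ht

end Lyapunov

theorem isBounded_image_sublevel_of_continuous {E F : Type*} [SeminormedAddCommGroup E]
    [ProperSpace E] [PseudoMetricSpace F] {f : E → F} (hf : Continuous f) {H : Set E} {V : E → ℝ}
    (hV : ∀ M > 0, ∃ R, ∀ y ∈ H, R < ‖y‖ → M < V y) (c : ℝ) :
    IsBounded (f '' {y ∈ H | V y ≤ c}) := by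
  obtain ⟨R, hR⟩ := hV (max c 1) (by positivity)
  have hsub : {y ∈ H | V y ≤ c} ⊆ closedBall 0 R := by
    rintro y ⟨hyH, hyc⟩
    rw [mem_closedBall_zero_iff]
    by_contra! hlt
    exact (hyc.trans (le_max_left c 1)).not_gt (hR y hyH hlt)
  exact ((isCompact_closedBall 0 R).image hf).isBounded.subset (image_mono hsub)

theorem zero_mem_lowerBounds_image_of_pos {E R : Type*} [Zero E] [Zero R] [Preorder R]
    {H : Set E} {V : E → R} (hV0 : V 0 = 0) (hVpos : ∀ y ∈ H, y ≠ 0 → 0 < V y) :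
    0 ∈ lowerBounds (V '' H) := by
  rintro _ ⟨y, hy, rfl⟩
  rcases eq_or_ne y 0 with rfl | hne
  exacts [hV0.ge, (hVpos y hy hne).le]

theorem stmt_7 (n k : ℕ) (hk : 0 < k)
    (f : EuclideanSpace ℝ (Fin n) → EuclideanSpace ℝ (Fin n)) (hf : Continuous f)
    (h : EuclideanSpace ℝ (Fin n) → ℝ) (hh : Continuous h)
    (h0 : h 0 = 0)
    (xs : Fin k → EuclideanSpace ℝ (Fin n))
    (hxs0 : xs ⟨0, hk⟩ = 0)
    (hxsH : ∀ i, h (xs i) = 0)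
    (hxs_distinct : Function.Injective xs)
    (hxs_eq : ∀ i, f (xs i) = 0)
    (V : EuclideanSpace ℝ (Fin n) → ℝ) (hV : ContDiff ℝ 1 V)
    (hV0 : V 0 = 0)
    (hVpos : ∀ x, h x = 0 → x ≠ 0 → 0 < V x)
    (hVrad : ∀ M > 0, ∃ R > 0, ∀ x, h x = 0 → R < ‖x‖ → M < V x)
    (ε : ℝ) (hε : 0 < ε)
    (hVdot : ∀ x, h x = 0 →
      ⟪gradient V x, f x⟫ ≤ -ε * ∏ i : Fin k, ‖x - xs i‖ ^ 2) :
    ∀ x : ℝ → EuclideanSpace ℝ (Fin n), IsGlobalSolutionOn f h x →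
      ∀ δ > 0, ∃ T : ℝ, 0 ≤ T ∧ ∀ t ≥ T, ∃ i : Fin k, ‖x t - xs i‖ < δ := by
  intro x hx δ hδ
  have : Nonempty (Fin k) := ⟨⟨0, hk⟩⟩
  exact stmt_7_general (H := {y | h y = 0}) hε
    (fun y _ => hV.differentiable one_ne_zero y) ⟨0, zero_mem_lowerBounds_image_of_pos hV0 hVpos⟩
    (isBounded_image_sublevel_of_continuous hf (fun M hM => (hVrad M hM).imp fun _ => And.right) _)
    (fun y hy => by simpa only [inner_gradient_left] using hVdot y hy)
    (fun t ht => (hx t ht).1) (fun t ht => (hx t ht).2) hδ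
end

section
/- Define f : ℝ⁶ → ℝ⁶ by f₁(x) = −0.05·x₃x₅ + 0.05·x₂x₆; f₂(x) = −0.05·x₆ + 0.05·x₃x₄ − 0.05·x₁x₆; f₃(x) = 0.05·x₅ − 0.05·x₂x₄ + 0.05·x₁x₅; f₄(x) = −0.016·x₄; f₅(x) = −0.00226·x₃ − 0.016·x₅ + 0.0133·x₄x₆ − 0.00807·x₂²x₃ − 0.00799·x₃³ + 0.00389·x₂⁴x₃ + 0.00389·x₃⁵; f₆(x) = 0.00226·x₂ − 0.016·x₆ − 0.0133·x₄x₅ + 0.00799·x₂³ + 0.00807·x₂x₃² − 0.00389·x₂⁵ − 0.00389·x₂x₃⁴, and h : ℝ⁶ → ℝ by h(x) = 2x₁ + x₁² + x₂² + x₃². Then {x ∈ ℝ⁶ : h(x) = 0 and f(x) = 0} = {(0,0,0,0,0,0), (−2,0,0,0,0,0)}; that is, the closed-loop system has exactly two equilibrium points on the constraint manifold H = {x : h(x) = 0}. -/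
/-- The transformed closed-loop aerostability dynamics of Example 1. -/
def aeroF (x : Fin 6 → ℝ) : Fin 6 → ℝ :=
  ![-0.05 * (x 2 * x 4) + 0.05 * (x 1 * x 5),
    -0.05 * x 5 + 0.05 * (x 2 * x 3) - 0.05 * (x 0 * x 5),
    0.05 * x 4 - 0.05 * (x 1 * x 3) + 0.05 * (x 0 * x 4),
    -0.016 * x 3,
    -0.00226 * x 2 - 0.016 * x 4 + 0.0133 * (x 3 * x 5) - 0.00807 * (x 1 ^ 2 * x 2)
      - 0.00799 * x 2 ^ 3 + 0.00389 * (x 1 ^ 4 * x 2) + 0.00389 * x 2 ^ 5,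
    0.00226 * x 1 - 0.016 * x 5 - 0.0133 * (x 3 * x 4) + 0.00799 * x 1 ^ 3
      + 0.00807 * (x 1 * x 2 ^ 2) - 0.00389 * x 1 ^ 5 - 0.00389 * (x 1 * x 2 ^ 4)]

/-- The unit-norm constraint in shifted coordinates. -/
def aeroH (x : Fin 6 → ℝ) : ℝ := 2 * x 0 + x 0 ^ 2 + x 1 ^ 2 + x 2 ^ 2

/-!
At an equilibrium the roll rate vanishes, the first equation makes the rates `(x 4, x 5)` parallel
to the pointing error `(x 1, x 2)`, and the torque balance makes them proportional to the
aerodynamic torque `(-k₂ * x 2, k₁ * x 1)`, where `k₁` and `k₂` are stiffnesses. Eliminating the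
rates gives `k₁ * x 1 ^ 2 + k₂ * x 2 ^ 2 = 0`. Both stiffnesses are positive near the flow axis, in
a region that contains the whole constraint sphere, so equilibria lie on that axis, which meets the
sphere in two points.
-/

/-- The stiffness of the aerodynamic restoring torque. At zero roll rate `x 3`, the entries `4` and
`5` of `aeroF x` are `-aeroStiffness (x 1) (x 2) * x 2` and `aeroStiffness (x 2) (x 1) * x 1`, up to
the damping terms `-0.016 * x 4` and `-0.016 * x 5`: the second argument is the pointing coordinate
which the stiffness multiplies. -/
def aeroStiffness (s t : ℝ) : ℝ :=
  0.00226 + 0.00807 * s ^ 2 + 0.00799 * t ^ 2 - 0.00389 * (s ^ 4 + t ^ 4)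

theorem aeroStiffness_pos {s t : ℝ} (h : s ^ 2 + t ^ 2 ≤ 2) : 0 < aeroStiffness s t := by
  have quartic_le : s ^ 4 + t ^ 4 ≤ 2 * (s ^ 2 + t ^ 2) := by
    calc s ^ 4 + t ^ 4 ≤ (s ^ 2 + t ^ 2) * (s ^ 2 + t ^ 2) := by
          linarith [mul_nonneg (sq_nonneg s) (sq_nonneg t)]
      _ ≤ 2 * (s ^ 2 + t ^ 2) := by gcongr
  unfold aeroStiffness
  linarith [sq_nonneg s, sq_nonneg t]

theorem mul_sq_add_mul_sq_eq_zero {R : Type*} [Ring R] [LinearOrder R] [IsStrictOrderedRing R]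
    {p q a b : R} (hp : 0 < p) (hq : 0 < q) : p * a ^ 2 + q * b ^ 2 = 0 ↔ a = 0 ∧ b = 0 := by
  rw [add_eq_zero_iff_of_nonneg (by positivity) (by positivity)]
  simp [hp.ne', hq.ne']

theorem aeroF_eq_zero_iff (x : Fin 6 → ℝ) :
    aeroF x = 0 ↔
      x 1 * x 5 = x 2 * x 4 ∧ (1 + x 0) * x 5 = 0 ∧ (1 + x 0) * x 4 = 0 ∧ x 3 = 0 ∧
        0.016 * x 4 = -(aeroStiffness (x 1) (x 2) * x 2) ∧
        0.016 * x 5 = aeroStiffness (x 2) (x 1) * x 1 := by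
  have entries_eq_zero_iff : aeroF x = 0 ↔ aeroF x 0 = 0 ∧ aeroF x 1 = 0 ∧ aeroF x 2 = 0 ∧
      aeroF x 3 = 0 ∧ aeroF x 4 = 0 ∧ aeroF x 5 = 0 := by
    simp [funext_iff, Fin.forall_fin_succ]
  rw [entries_eq_zero_iff]
  simp only [aeroF, aeroStiffness, Matrix.cons_val]
  constructor
  · rintro ⟨h0, h1, h2, h3, h4, h5⟩
    have roll : x 3 = 0 := by linarith
    rw [roll] at h1 h2 h4 h5
    exact ⟨by linarith, by linarith, by linarith, roll, by linarith, by linarith⟩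
  · rintro ⟨parallel, kin₁, kin₂, roll, pitch, yaw⟩
    rw [roll]
    refine ⟨?_, ?_, ?_, ?_, ?_, ?_⟩ <;> linarith

theorem aeroF_eq_zero_iff_of_sq_add_sq_le_two {x : Fin 6 → ℝ} (hx : x 1 ^ 2 + x 2 ^ 2 ≤ 2) :
    aeroF x = 0 ↔ ∀ i ≠ 0, x i = 0 := by
  rw [aeroF_eq_zero_iff]
  constructor
  · rintro ⟨parallel, -, -, roll, pitch, yaw⟩
    have torque_work :
        aeroStiffness (x 2) (x 1) * x 1 ^ 2 + aeroStiffness (x 1) (x 2) * x 2 ^ 2 = 0 := by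
      linear_combination 0.016 * parallel + x 2 * pitch - x 1 * yaw
    obtain ⟨x1, x2⟩ := (mul_sq_add_mul_sq_eq_zero
      (aeroStiffness_pos (by rwa [add_comm])) (aeroStiffness_pos hx)).mp torque_work
    rw [x1, x2] at pitch yaw
    have x4 : x 4 = 0 := by linarith
    have x5 : x 5 = 0 := by linarith
    simp [Fin.forall_fin_succ, x1, x2, roll, x4, x5]
  · intro h
    simp [h]

theorem sq_add_sq_le_one_of_aeroH_nonpos {x : Fin 6 → ℝ} (hx : aeroH x ≤ 0) :
    x 1 ^ 2 + x 2 ^ 2 ≤ 1 := by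
  have in_ball : (1 + x 0) ^ 2 + x 1 ^ 2 + x 2 ^ 2 ≤ 1 := by
    unfold aeroH at hx
    linear_combination hx
  linarith [sq_nonneg (1 + x 0)]

theorem aeroH_eq_zero_iff_of_axis {x : Fin 6 → ℝ} (hx : ∀ i ≠ 0, x i = 0) :
    aeroH x = 0 ↔ x 0 = 0 ∨ x 0 = -2 := by
  have factored : aeroH x = x 0 * (x 0 + 2) := by
    simp only [aeroH, hx 1 (by decide), hx 2 (by decide)]
    ring
  rw [factored, mul_eq_zero, add_eq_zero_iff_eq_neg]

theorem eq_vecCons_zeros_iff {M : Type*} [Zero M] {x : Fin 6 → M} {c : M} :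
    x = ![c, 0, 0, 0, 0, 0] ↔ x 0 = c ∧ ∀ i ≠ 0, x i = 0 := by
  simp [funext_iff, Fin.forall_fin_succ]

/-- The closed-loop aerostability system has exactly two equilibria on the
constraint manifold `H = {x | h(x) = 0}`. -/
theorem stmt_14 :
    {x : Fin 6 → ℝ | aeroH x = 0 ∧ aeroF x = 0} =
      {![0, 0, 0, 0, 0, 0], ![-2, 0, 0, 0, 0, 0]} := by
  ext x
  calc aeroH x = 0 ∧ aeroF x = 0
    _ ↔ aeroH x = 0 ∧ ∀ i ≠ 0, x i = 0 := and_congr_right fun hx =>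
        aeroF_eq_zero_iff_of_sq_add_sq_le_two <|
          (sq_add_sq_le_one_of_aeroH_nonpos hx.le).trans one_le_two
    _ ↔ (x 0 = 0 ∨ x 0 = -2) ∧ ∀ i ≠ 0, x i = 0 := and_congr_left aeroH_eq_zero_iff_of_axis
    _ ↔ x = ![0, 0, 0, 0, 0, 0] ∨ x = ![-2, 0, 0, 0, 0, 0] := by
        rw [or_and_right, eq_vecCons_zeros_iff, eq_vecCons_zeros_iff]
end
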